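/- Let n ≥ 2, let Φ: ℝⁿ → [0,∞) be positively 1-homogeneous, convex and admissible with data (g_ν, φ_ν) for each unit ν. Fix a unit vector ν, an (n−1)-dimensional convex body E ⊆ ν^⊥ with 0 ∈ E, and b = −hν with h > 0. Set C = 𝒞(b, E) and C_lat = 𝒞(b, ∂E), with ν_C the inner unit normal of C. Then ∫_{C_lat} Φ(ν_C) dℋ^{n−1} ≥ ℋ^{n−1}(W_ν) r^{n−2} g_ν(h, r), where r > 0 satisfies r^{n−1} ℋ^{n−1}(W_ν) = ℋ^{n−1}(E) and W_ν = {z ∈ ν^⊥ : φ_ν*(z) ≤ 1} is the Wulff shape of φ_ν in ν^⊥, with φ_ν*(z) = sup{z·w : φ_ν(w) < 1}. -/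

import Mathlib

open MeasureTheory Metric

local notation "⟪" x ", " y "⟫" => @inner ℝ _ _ x y

/-- The cone `𝒞(p, S)`: union of all segments joining `p` to points of `S`. -/
def coneOver {n : ℕ} (p : EuclideanSpace ℝ (Fin n)) (S : Set (EuclideanSpace ℝ (Fin n))) :
    Set (EuclideanSpace ℝ (Fin n)) :=
  {y | ∃ t ∈ Set.Icc (0 : ℝ) 1, ∃ x ∈ S, y = (1 - t) • p + t • x}

/-- Relative boundary of `E` inside the ambient set `P`. -/
def relBoundary {n : ℕ} (P E : Set (EuclideanSpace ℝ (Fin n))) :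
    Set (EuclideanSpace ℝ (Fin n)) :=
  E \ {x | ∃ ε > (0 : ℝ), ball x ε ∩ P ⊆ E}

/-- `v` is an inner unit normal of the convex set `E` at the boundary point `x`. -/
def IsInnerNormalAt {n : ℕ} (E : Set (EuclideanSpace ℝ (Fin n)))
    (x v : EuclideanSpace ℝ (Fin n)) : Prop :=
  ‖v‖ = 1 ∧ ∀ y ∈ E, 0 ≤ ⟪v, y - x⟫

/-- The dual function `φ*` of `φ` on the hyperplane `ν^⊥`:
`φ*(z) = sup { ⟪z,w⟫ : w ∈ ν^⊥, φ(w) < 1 }`. -/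
noncomputable def dualGauge {n : ℕ} (ν : EuclideanSpace ℝ (Fin n))
    (φ : EuclideanSpace ℝ (Fin n) → ℝ) (z : EuclideanSpace ℝ (Fin n)) : ℝ :=
  sSup {s : ℝ | ∃ w : EuclideanSpace ℝ (Fin n), ⟪w, ν⟫ = 0 ∧ φ w < 1 ∧ s = ⟪z, w⟫}

/-- The Wulff shape of `φ` in the hyperplane `ν^⊥`: `W_ν = {z ∈ ν^⊥ : φ*(z) ≤ 1}`. -/
noncomputable def wulffShape {n : ℕ} (ν : EuclideanSpace ℝ (Fin n))
    (φ : EuclideanSpace ℝ (Fin n) → ℝ) : Set (EuclideanSpace ℝ (Fin n)) :=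
  {z | ⟪z, ν⟫ = 0 ∧ dualGauge ν φ z ≤ 1}

/-!
Choose `e` in the relative interior of the base and let `p` be the gauge of `E - e` in `ν^⊥`. The
lateral surface is the graph of `p` over the base in the oblique direction `e + h • ν`: it is
parametrized by `x ↦ x + p x • (e + h • ν)`, up to a translation. At `x` the vector
`(1 + ⟪∇p x, e⟫) • ν - h • ∇p x` points along the inner normal and its length is the area density
of the parametrization, so homogeneity of `φ` and a linear minorant `α s + β t ≤ g (s, t)` which is
sharp at `(h, r)` bound the integral of `Φ` from below by
`α h ∫ φ (-∇p) + β ∫ (1 + ⟪∇p, e⟫)` over the base. The last integral is `|E|` by the divergence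
theorem, and `∫ φ (-∇p) ≥ |W| r ^ (n - 2)` is the Wulff inequality for the base: compare `E` with
`E + ε W` by the Brunn–Minkowski inequality and slice the difference along the level sets of `p`.
-/

open Set Filter Module
open scoped Pointwise ENNReal NNReal Topology

section BrunnMinkowski

lemma volume_add_volume_le_volume_add_of_isCompact {A B : Set ℝ} (hA : IsCompact A)
    (hB : IsCompact B) (hA₀ : A.Nonempty) (hB₀ : B.Nonempty) :
    volume A + volume B ≤ volume (A + B) := by
  obtain ⟨a, haA, ha⟩ := hA.exists_isGreatest hA₀
  obtain ⟨b, hbB, hb⟩ := hB.exists_isLeast hB₀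
  have measurableSet_right : MeasurableSet ((a + ·) '' B) :=
    (hB.image (by fun_prop)).measurableSet
  have disjoint_translates : AEDisjoint volume ((b + ·) '' A) ((a + ·) '' B) := by
    refine measure_mono_null (t := {a + b}) ?_ (by simp)
    rintro _ ⟨⟨x, hx, rfl⟩, ⟨y, hy, hxy⟩⟩
    have := ha hx
    have := hb hy
    simp only [mem_singleton_iff] at *
    linarith
  calc volume A + volume B
      = volume ((b + ·) '' A) + volume ((a + ·) '' B) := by
        simp only [image_add_left, measure_preimage_add]
    _ = volume ((b + ·) '' A ∪ (a + ·) '' B) :=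
        (measure_union₀ measurableSet_right.nullMeasurableSet disjoint_translates).symm
    _ ≤ volume (A + B) := by
        refine measure_mono ?_
        rintro _ (⟨x, hx, rfl⟩ | ⟨x, hx, rfl⟩)
        · exact ⟨x, hx, b, hbB, add_comm _ _⟩
        · exact ⟨a, haA, x, hx, rfl⟩

lemma volume_add_volume_le_volume_add {A B : Set ℝ} (hA : MeasurableSet A)
    (hB : MeasurableSet B) (hA₀ : A.Nonempty) (hB₀ : B.Nonempty) :
    volume A + volume B ≤ volume (A + B) := by
  obtain ⟨a, ha⟩ := hA₀
  obtain ⟨b, hb⟩ := hB₀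
  rw [hA.measure_eq_iSup_isCompact, hB.measure_eq_iSup_isCompact]
  simp only [iSup_and']
  refine ENNReal.biSup_add_biSup_le' ⟨∅, by simp⟩ ⟨∅, by simp⟩ ?_
  rintro K ⟨hKA, hK⟩ K' ⟨hKB, hK'⟩
  calc volume K + volume K' ≤ volume (insert a K) + volume (insert b K') := by
        gcongr <;> exact subset_insert _ _
    _ ≤ volume (insert a K + insert b K') :=
        volume_add_volume_le_volume_add_of_isCompact (hK.insert a) (hK'.insert b)
          (insert_nonempty _ _) (insert_nonempty _ _)
    _ ≤ volume (A + B) := by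
        gcongr
        · exact insert_subset ha hKA
        · exact insert_subset hb hKB

lemma mul_volume_add_mul_volume_le_volume_smul_add_smul {A B : Set ℝ} (hA : MeasurableSet A)
    (hB : MeasurableSet B) (hA₀ : A.Nonempty) (hB₀ : B.Nonempty) {s t : ℝ} (hs : 0 < s)
    (ht : 0 < t) :
    ENNReal.ofReal s * volume A + ENNReal.ofReal t * volume B ≤ volume (s • A + t • B) := by
  have volume_smul {c : ℝ} (hc : 0 < c) (S : Set ℝ) :
      volume (c • S) = ENNReal.ofReal c * volume S := by
    simp [Measure.addHaar_smul, abs_of_pos hc]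
  rw [← volume_smul hs, ← volume_smul ht]
  exact volume_add_volume_le_volume_add (hA.const_smul₀ s) (hB.const_smul₀ t) hA₀.smul_set
    hB₀.smul_set

lemma lintegral_eq_lintegral_meas_ofReal_lt {α : Type*} [MeasurableSpace α] (μ : Measure α)
    {f : α → ℝ≥0∞} (hf : Measurable f) (hfinite : ∀ x, f x ≠ ∞) :
    ∫⁻ x, f x ∂μ = ∫⁻ c in Ioi (0 : ℝ), μ {x | ENNReal.ofReal c < f x} := by
  have layercake := lintegral_eq_lintegral_meas_lt μ (f := fun x ↦ (f x).toReal)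
    (Eventually.of_forall fun _ ↦ ENNReal.toReal_nonneg) hf.ennreal_toReal.aemeasurable
  simp only [ENNReal.ofReal_toReal (hfinite _)] at layercake
  refine layercake.trans (setLIntegral_congr_fun measurableSet_Ioi fun c hc ↦ ?_)
  simp only [ENNReal.ofReal_lt_iff_lt_toReal (mem_Ioi.1 hc).le (hfinite _)]

lemma ennreal_geom_mean_le_arith_mean2_weighted {s t : ℝ} (hs : 0 < s) (ht : 0 < t)
    (hst : s + t = 1) (a b : ℝ≥0∞) :
    a ^ s * b ^ t ≤ ENNReal.ofReal s * a + ENNReal.ofReal t * b := by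
  rcases eq_or_ne a ∞ with rfl | ha
  · simp [hs, ENNReal.mul_top]
  rcases eq_or_ne b ∞ with rfl | hb
  · simp [ht, ENNReal.mul_top]
  lift a to ℝ≥0 using ha
  lift b to ℝ≥0 using hb
  rw [← ENNReal.coe_rpow_of_nonneg _ hs.le, ← ENNReal.coe_rpow_of_nonneg _ ht.le,
    ENNReal.ofReal, ENNReal.ofReal]
  norm_cast
  have amgm := NNReal.geom_mean_le_arith_mean2_weighted s.toNNReal t.toNNReal a b
    (by rw [← Real.toNNReal_add hs.le ht.le, hst, Real.toNNReal_one])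
  rwa [Real.coe_toNNReal _ hs.le, Real.coe_toNNReal _ ht.le] at amgm

lemma mul_lintegral_add_mul_lintegral_le_of_iSup_eq_one {s t : ℝ} (hs : 0 < s) (ht : 0 < t)
    (hst : s + t = 1) {f g h : ℝ → ℝ≥0∞} (hf : Measurable f) (hg : Measurable g)
    (hh : Measurable h) (hf₁ : ⨆ x, f x = 1) (hg₁ : ⨆ x, g x = 1) (hh₁ : ∀ x, h x ≤ 1)
    (hfgh : ∀ x y, f x ^ s * g y ^ t ≤ h (s * x + t * y)) :
    ENNReal.ofReal s * (∫⁻ x, f x) + ENNReal.ofReal t * (∫⁻ x, g x) ≤ ∫⁻ x, h x := by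
  have le_one {u : ℝ → ℝ≥0∞} (hu : ⨆ x, u x = 1) (x : ℝ) : u x ≤ 1 := hu ▸ le_iSup u x
  have layercake {u : ℝ → ℝ≥0∞} (hu : Measurable u) (hu₁ : ∀ x, u x ≤ 1) :=
    lintegral_eq_lintegral_meas_ofReal_lt volume hu fun x ↦ ((hu₁ x).trans_lt (by simp)).ne
  have measurable_meas (u : ℝ → ℝ≥0∞) :
      Measurable fun c : ℝ ↦ volume {x | ENNReal.ofReal c < u x} :=
    Antitone.measurable fun c d hcd ↦
      measure_mono fun x hx ↦ (ENNReal.ofReal_le_ofReal hcd).trans_lt hx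
  rw [layercake hf (le_one hf₁), layercake hg (le_one hg₁), layercake hh hh₁,
    ← lintegral_const_mul _ (measurable_meas f), ← lintegral_const_mul _ (measurable_meas g),
    ← lintegral_add_left ((measurable_meas f).const_mul _)]
  refine setLIntegral_mono (measurable_meas h) fun c _ ↦ ?_
  rcases lt_or_ge c 1 with hc₁ | hc₁
  · have nonempty_superlevel {u : ℝ → ℝ≥0∞} (hu : ⨆ x, u x = 1) :
        {x | ENNReal.ofReal c < u x}.Nonempty := by
      simpa only [← hu, lt_iSup_iff, ← Set.nonempty_def] using! ENNReal.ofReal_lt_one.2 hc₁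
    refine (mul_volume_add_mul_volume_le_volume_smul_add_smul
      (measurableSet_lt measurable_const hf) (measurableSet_lt measurable_const hg)
      (nonempty_superlevel hf₁) (nonempty_superlevel hg₁) hs ht).trans (measure_mono ?_)
    rintro _ ⟨_, ⟨x, hx, rfl⟩, _, ⟨y, hy, rfl⟩, rfl⟩
    calc ENNReal.ofReal c = ENNReal.ofReal c ^ s * ENNReal.ofReal c ^ t := by
          rw [← ENNReal.rpow_add_of_nonneg _ _ hs.le ht.le, hst, ENNReal.rpow_one]
      _ < f x ^ s * g y ^ t :=
          ENNReal.mul_lt_mul (ENNReal.rpow_lt_rpow hx hs) (ENNReal.rpow_lt_rpow hy ht)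
      _ ≤ h (s * x + t * y) := hfgh x y
  · have empty_superlevel {u : ℝ → ℝ≥0∞} (hu : ⨆ x, u x = 1) :
        {x | ENNReal.ofReal c < u x} = ∅ :=
      eq_empty_of_forall_notMem fun x hx ↦ absurd (hx.trans_le (le_one hu x)) (by simpa)
    simp [empty_superlevel hf₁, empty_superlevel hg₁]

/-- The Prékopa–Leindler inequality for the measure `μ`, quantified over all weights
`s, t > 0` with `s + t = 1`. -/
def IsPrekopaLeindler {E : Type*} [AddCommGroup E] [Module ℝ E] [MeasurableSpace E]
    (μ : Measure E) : Prop :=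
  ∀ s t : ℝ, 0 < s → 0 < t → s + t = 1 → ∀ f g h : E → ℝ≥0∞,
    Measurable f → Measurable g → Measurable h →
    (∀ x y, f x ^ s * g y ^ t ≤ h (s • x + t • y)) →
    (∫⁻ x, f x ∂μ) ^ s * (∫⁻ x, g x ∂μ) ^ t ≤ ∫⁻ x, h x ∂μ

lemma lintegral_rpow_mul_lintegral_rpow_le_of_iSup_ne_top {s t : ℝ} (hs : 0 < s) (ht : 0 < t)
    (hst : s + t = 1) {f g h : ℝ → ℝ≥0∞} (hf : Measurable f) (hg : Measurable g)
    (hh : Measurable h) (hf_top : ⨆ x, f x ≠ ∞) (hg_top : ⨆ x, g x ≠ ∞)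
    (hfgh : ∀ x y, f x ^ s * g y ^ t ≤ h (s * x + t * y)) :
    (∫⁻ x, f x) ^ s * (∫⁻ x, g x) ^ t ≤ ∫⁻ x, h x := by
  set a := ⨆ x, f x
  set b := ⨆ x, g x
  rcases eq_or_ne a 0 with ha | ha
  · simp [ENNReal.iSup_eq_zero.1 ha, hs]
  rcases eq_or_ne b 0 with hb | hb
  · simp [ENNReal.iSup_eq_zero.1 hb, ht]
  set c := a ^ s * b ^ t with hc
  have hc_top : c ≠ ∞ := ENNReal.mul_ne_top (ENNReal.rpow_ne_top_of_nonneg hs.le hf_top)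
    (ENNReal.rpow_ne_top_of_nonneg ht.le hg_top)
  have hc₀ : c ≠ 0 := by simp [hc, ENNReal.rpow_eq_zero_iff, ha, hb, hf_top, hg_top]
  have iSup_mul_inv {u : ℝ → ℝ≥0∞} (hu : ⨆ x, u x ≠ 0) (hu_top : ⨆ x, u x ≠ ∞) :
      ⨆ x, u x * (⨆ x, u x)⁻¹ = 1 := by
    rw [← ENNReal.iSup_mul, ENNReal.mul_inv_cancel hu hu_top]
  have scale_mul (x y : ℝ≥0∞) :
      (x * a⁻¹) ^ s * (y * b⁻¹) ^ t = x ^ s * y ^ t * c⁻¹ := by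
    rw [ENNReal.mul_rpow_of_nonneg _ _ hs.le, ENNReal.mul_rpow_of_nonneg _ _ ht.le,
      ENNReal.inv_rpow, ENNReal.inv_rpow, hc, ENNReal.mul_inv
        (Or.inr (ENNReal.rpow_ne_top_of_nonneg ht.le hg_top))
        (Or.inl (ENNReal.rpow_ne_top_of_nonneg hs.le hf_top))]
    ring
  have normalized := mul_lintegral_add_mul_lintegral_le_of_iSup_eq_one hs ht hst
    (hf.mul_const a⁻¹) (hg.mul_const b⁻¹) ((hh.mul_const c⁻¹).min measurable_const)
    (iSup_mul_inv ha hf_top) (iSup_mul_inv hb hg_top) (fun x ↦ min_le_right _ 1) fun x y ↦ by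
      refine le_min (by rw [scale_mul]; gcongr; exact hfgh x y) ?_
      refine mul_le_one' (ENNReal.rpow_le_one ?_ hs.le) (ENNReal.rpow_le_one ?_ ht.le)
      · exact iSup_mul_inv ha hf_top ▸ le_iSup (fun x ↦ f x * a⁻¹) x
      · exact iSup_mul_inv hb hg_top ▸ le_iSup (fun y ↦ g y * b⁻¹) y
  rw [← ENNReal.mul_le_mul_iff_left (ENNReal.inv_ne_zero.2 hc_top) (ENNReal.inv_ne_top.2 hc₀)]
  calc (∫⁻ x, f x) ^ s * (∫⁻ x, g x) ^ t * c⁻¹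
      = (∫⁻ x, f x * a⁻¹) ^ s * (∫⁻ x, g x * b⁻¹) ^ t := by
        rw [lintegral_mul_const _ hf, lintegral_mul_const _ hg, scale_mul]
    _ ≤ _ := ennreal_geom_mean_le_arith_mean2_weighted hs ht hst _ _
    _ ≤ ∫⁻ x, min (h x * c⁻¹) 1 := normalized
    _ ≤ ∫⁻ x, h x * c⁻¹ := lintegral_mono fun x ↦ min_le_left _ _
    _ = (∫⁻ x, h x) * c⁻¹ := lintegral_mul_const _ hh

lemma tendsto_lintegral_min_natCast {α : Type*} [MeasurableSpace α] (μ : Measure α)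
    {f : α → ℝ≥0∞} (hf : Measurable f) :
    Tendsto (fun N : ℕ ↦ ∫⁻ x, min (f x) N ∂μ) atTop (𝓝 (∫⁻ x, f x ∂μ)) := by
  refine lintegral_tendsto_of_tendsto_of_monotone
    (fun N ↦ (hf.min measurable_const).aemeasurable)
    (Eventually.of_forall fun x N M hNM ↦ by dsimp only; gcongr) (Eventually.of_forall fun x ↦ ?_)
  simpa using tendsto_const_nhds.min ENNReal.tendsto_nat_nhds_top

lemma isPrekopaLeindler_volume_real : IsPrekopaLeindler (volume : Measure ℝ) := by
  intro s t hs ht hst f g h hf hg hh hfgh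
  rcases eq_or_ne (∫⁻ x, f x) 0 with hf₀ | hf₀
  · simp [hf₀, hs]
  rcases eq_or_ne (∫⁻ x, g x) 0 with hg₀ | hg₀
  · simp [hg₀, ht]
  have tendsto_truncated : Tendsto
      (fun N : ℕ ↦ (∫⁻ x, min (f x) N) ^ s * (∫⁻ x, min (g x) N) ^ t)
      atTop (𝓝 ((∫⁻ x, f x) ^ s * (∫⁻ x, g x) ^ t)) :=
    ENNReal.Tendsto.mul
      ((ENNReal.continuous_rpow_const.tendsto _).comp (tendsto_lintegral_min_natCast _ hf))
      (Or.inl (by simp [ENNReal.rpow_eq_zero_iff, hf₀, hs.not_gt]))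
      ((ENNReal.continuous_rpow_const.tendsto _).comp (tendsto_lintegral_min_natCast _ hg))
      (Or.inl (by simp [ENNReal.rpow_eq_zero_iff, hg₀, ht.not_gt]))
  have iSup_min_ne_top (u : ℝ → ℝ≥0∞) (N : ℕ) : ⨆ x, min (u x) N ≠ ∞ :=
    ((iSup_le fun x ↦ min_le_right _ _).trans_lt (ENNReal.natCast_lt_top N)).ne
  refine le_of_tendsto' tendsto_truncated fun N ↦ ?_
  refine lintegral_rpow_mul_lintegral_rpow_le_of_iSup_ne_top hs ht hst
    (hf.min measurable_const) (hg.min measurable_const) hh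
    (iSup_min_ne_top f N) (iSup_min_ne_top g N) fun x y ↦ le_trans ?_ (hfgh x y)
  gcongr <;> exact min_le_left _ _

namespace IsPrekopaLeindler

variable {E F : Type*} [AddCommGroup E] [Module ℝ E] [MeasurableSpace E] {μ : Measure E}
  [AddCommGroup F] [Module ℝ F] [MeasurableSpace F] {ν : Measure F}

lemma prod [SFinite ν] (hμ : IsPrekopaLeindler μ) (hν : IsPrekopaLeindler ν) :
    IsPrekopaLeindler (μ.prod ν) := by
  intro s t hs ht hst f g h hf hg hh hfgh
  rw [lintegral_prod _ hf.aemeasurable, lintegral_prod _ hg.aemeasurable,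
    lintegral_prod _ hh.aemeasurable]
  refine hμ s t hs ht hst _ _ _ hf.lintegral_prod_right' hg.lintegral_prod_right'
    hh.lintegral_prod_right' fun x y ↦ ?_
  exact hν s t hs ht hst _ _ _ (by fun_prop) (by fun_prop) (by fun_prop)
    fun x' y' ↦ hfgh (x, x') (y, y')

lemma of_measurePreserving (hμ : IsPrekopaLeindler μ) (e : E →ₗ[ℝ] F)
    (he : MeasurePreserving e μ ν) : IsPrekopaLeindler ν := by
  intro s t hs ht hst f g h hf hg hh hfgh
  rw [← he.lintegral_comp hf, ← he.lintegral_comp hg, ← he.lintegral_comp hh]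
  refine hμ s t hs ht hst _ _ _ (hf.comp he.measurable) (hg.comp he.measurable)
    (hh.comp he.measurable) fun x y ↦ ?_
  simpa only [map_add, map_smul] using hfgh (e x) (e y)

lemma smul (hμ : IsPrekopaLeindler μ) (c : ℝ≥0∞) : IsPrekopaLeindler (c • μ) := by
  intro s t hs ht hst f g h hf hg hh hfgh
  simp only [lintegral_smul_measure, smul_eq_mul]
  calc (c * ∫⁻ x, f x ∂μ) ^ s * (c * ∫⁻ x, g x ∂μ) ^ t
      = (c ^ s * c ^ t) * ((∫⁻ x, f x ∂μ) ^ s * (∫⁻ x, g x ∂μ) ^ t) := by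
        rw [ENNReal.mul_rpow_of_nonneg _ _ hs.le, ENNReal.mul_rpow_of_nonneg _ _ ht.le]
        ring
    _ = c * ((∫⁻ x, f x ∂μ) ^ s * (∫⁻ x, g x ∂μ) ^ t) := by
        rw [← ENNReal.rpow_add_of_nonneg _ _ hs.le ht.le, hst, ENNReal.rpow_one]
    _ ≤ c * ∫⁻ x, h x ∂μ := by
        gcongr
        exact hμ s t hs ht hst f g h hf hg hh hfgh

end IsPrekopaLeindler

lemma isPrekopaLeindler_volume_pi (m : ℕ) :
    IsPrekopaLeindler (volume : Measure (Fin m → ℝ)) := by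
  induction m with
  | zero =>
    intro s t _ _ _ f g h _ _ _ hfgh
    have lintegral_eq (u : (Fin 0 → ℝ) → ℝ≥0∞) : ∫⁻ x, u x = u 0 := by
      rw [lintegral_unique, volume_pi, Measure.pi_empty_univ, mul_one]
      exact congrArg u (Subsingleton.elim _ _)
    simpa only [lintegral_eq, smul_zero, add_zero] using hfgh 0 0
  | succ m ih =>
    let cons : (ℝ × (Fin m → ℝ)) ≃ₗ[ℝ] (Fin (m + 1) → ℝ) := Fin.consLinearEquiv ℝ fun _ ↦ ℝ
    have cons_eq : ⇑cons = (MeasurableEquiv.piFinSuccAbove (fun _ ↦ ℝ) 0).symm := by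
      ext x i
      refine Fin.cases ?_ (fun j ↦ ?_) i <;> simp [cons, MeasurableEquiv.piFinSuccAbove]
    have cons_measurePreserving : MeasurePreserving cons volume volume :=
      cons_eq ▸ (volume_preserving_piFinSuccAbove (fun _ : Fin (m + 1) ↦ ℝ) 0).symm
    exact (isPrekopaLeindler_volume_real.prod ih).of_measurePreserving cons.toLinearMap
      cons_measurePreserving

variable {V : Type*} [NormedAddCommGroup V] [NormedSpace ℝ V] [FiniteDimensional ℝ V]
  [MeasurableSpace V] [BorelSpace V] (μ : Measure V) [μ.IsAddHaarMeasure]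

lemma isPrekopaLeindler_addHaar : IsPrekopaLeindler μ := by
  let coords : (Fin (finrank ℝ V) → ℝ) ≃L[ℝ] V := (finBasis ℝ V).equivFunL.symm
  have volume_map : IsPrekopaLeindler (volume.map coords) :=
    (isPrekopaLeindler_volume_pi _).of_measurePreserving coords.toLinearMap
      (coords.continuous.measurable.measurePreserving _)
  rw [Measure.isAddLeftInvariant_eq_smul μ (volume.map coords)]
  exact volume_map.smul _

variable {A B : Set V}

lemma measure_rpow_mul_measure_rpow_le (hA : IsOpen A) (hB : MeasurableSet B) {s t : ℝ}
    (hs : 0 < s) (ht : 0 < t) (hst : s + t = 1) :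
    μ A ^ s * μ B ^ t ≤ μ (s • A + t • B) := by
  have hsum : MeasurableSet (s • A + t • B) := (hA.smul₀ hs.ne').add_right.measurableSet
  suffices indicator_le : ∀ x y, A.indicator (1 : V → ℝ≥0∞) x ^ s *
      B.indicator (1 : V → ℝ≥0∞) y ^ t ≤ (s • A + t • B).indicator 1 (s • x + t • y) by
    simpa [lintegral_indicator_one, hA.measurableSet, hB, hsum] using
      isPrekopaLeindler_addHaar μ s t hs ht hst _ _ _ (measurable_one.indicator hA.measurableSet)
        (measurable_one.indicator hB) (measurable_one.indicator hsum) indicator_le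
  intro x y
  by_cases hx : x ∈ A
  · by_cases hy : y ∈ B
    · simp [hx, hy, Set.add_mem_add (smul_mem_smul_set (a := s) hx)
        (smul_mem_smul_set (a := t) hy)]
    · simp [hy, ht]
  · simp [hx, hs]

lemma ofReal_add_pow_mul_measure_le (hA : IsOpen A) (hB : MeasurableSet B) {r : ℝ}
    (hr : 0 < r) (hAB : μ A = ENNReal.ofReal (r ^ finrank ℝ V) * μ B) {a b : ℝ} (ha : 0 < a)
    (hb : 0 < b) :
    ENNReal.ofReal ((a * r + b) ^ finrank ℝ V) * μ B ≤ μ (a • A + b • B) := by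
  set c := a * r + b
  have hc : 0 < c := by positivity
  have measure_rescaled : μ (r⁻¹ • A) = μ B := by
    rw [Measure.addHaar_smul, hAB, ← mul_assoc, ← ENNReal.ofReal_mul (abs_nonneg _),
      abs_of_pos (by positivity), inv_pow, inv_mul_cancel₀ (by positivity), ENNReal.ofReal_one,
      one_mul]
  have rescale : a • A + b • B = c • ((a * r / c) • r⁻¹ • A + (b / c) • B) := by
    simp only [smul_add, smul_smul]
    congr 2 <;> field_simp
  have weights_add : a * r / c + b / c = 1 := by rw [← add_div, div_self hc.ne']
  rw [rescale, Measure.addHaar_smul, abs_of_pos (by positivity)]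
  refine mul_le_mul_right ?_ _
  calc μ B = μ (r⁻¹ • A) ^ (a * r / c) * μ B ^ (b / c) := by
        rw [measure_rescaled, ← ENNReal.rpow_add_of_nonneg _ _ (by positivity) (by positivity),
          weights_add, ENNReal.rpow_one]
    _ ≤ μ ((a * r / c) • r⁻¹ • A + (b / c) • B) :=
        measure_rpow_mul_measure_rpow_le μ (hA.smul₀ (by positivity)) hB (by positivity)
          (by positivity) weights_add

end BrunnMinkowski

section AreaInequality

lemma hausdorffMeasure_image_le_of_edist_le {α X Y : Type*} [EMetricSpace X] [MeasurableSpace X]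
    [BorelSpace X] [EMetricSpace Y] [MeasurableSpace Y] [BorelSpace Y] {f : α → X} {g : α → Y}
    {s : Set α} {K : ℝ≥0} (hfg : ∀ x ∈ s, ∀ y ∈ s, edist (f x) (f y) ≤ K * edist (g x) (g y))
    {d : ℝ} (hd : 0 ≤ d) : μH[d] (f '' s) ≤ K ^ d * μH[d] (g '' s) := by
  rcases isEmpty_or_nonempty α with hα | hα
  · simp [eq_empty_of_isEmpty s]
  have invFunOn_mem_eq {x : α} (hx : x ∈ s) :
      Function.invFunOn g s (g x) ∈ s ∧ g (Function.invFunOn g s (g x)) = g x :=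
    Function.invFunOn_pos ⟨x, hx, rfl⟩
  have lipschitz : LipschitzOnWith K (f ∘ Function.invFunOn g s) (g '' s) := by
    rintro _ ⟨x, hx, rfl⟩ _ ⟨y, hy, rfl⟩
    simpa only [Function.comp_apply, (invFunOn_mem_eq hx).2, (invFunOn_mem_eq hy).2] using
      hfg _ (invFunOn_mem_eq hx).1 _ (invFunOn_mem_eq hy).1
  have image_subset : f '' s ⊆ (f ∘ Function.invFunOn g s) '' (g '' s) := by
    rintro _ ⟨x, hx, rfl⟩
    refine ⟨g x, mem_image_of_mem g hx, edist_le_zero.1 ?_⟩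
    simpa [(invFunOn_mem_eq hx).2] using hfg _ (invFunOn_mem_eq hx).1 x hx
  exact (measure_mono image_subset).trans (lipschitz.hausdorffMeasure_image_le hd)

variable {V W : Type*} [NormedAddCommGroup V] [InnerProductSpace ℝ V] [FiniteDimensional ℝ V]
  [NormedAddCommGroup W] [InnerProductSpace ℝ W]

lemma exists_edist_le_of_approximatesLinearOn {A : V →L[ℝ] W} (hA : A.toLinearMap.ker = ⊥)
    {q : ℝ≥0} (hq : 1 < q) :
    ∃ δ : ℝ≥0, δ ≠ 0 ∧ ∀ (F : V → W) (s : Set V), ApproximatesLinearOn F A s δ →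
      ∀ x ∈ s, ∀ y ∈ s, edist (A x) (A y) ≤ q * edist (F x) (F y) := by
  obtain ⟨K, hK, antilipschitz⟩ := A.toLinearMap.exists_antilipschitzWith hA
  have hq' : (1 : ℝ) < q := hq
  have : (0 : ℝ) < K := hK
  refine ⟨(1 - q⁻¹) / K, (div_pos (tsub_pos_of_lt (inv_lt_one_of_one_lt₀ hq)) hK).ne',
    fun F s hF x hx y hy ↦ ?_⟩
  have approx : ‖F x - F y - A (x - y)‖ ≤ ((1 - q⁻¹) / K : ℝ≥0) * ‖x - y‖ := hF x hx y hy
  have lower : ‖x - y‖ ≤ K * ‖A (x - y)‖ := by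
    simpa [dist_eq_norm] using antilipschitz.le_mul_dist x y
  have coe_delta : (((1 - q⁻¹) / K : ℝ≥0) : ℝ) = (1 - (q : ℝ)⁻¹) / K := by
    rw [NNReal.coe_div, NNReal.coe_sub (inv_le_one_of_one_le₀ hq.le)]
    simp
  have key : ‖A (x - y)‖ ≤ q * ‖F x - F y‖ := by
    have error_le : ‖F x - F y - A (x - y)‖ ≤ (1 - (q : ℝ)⁻¹) * ‖A (x - y)‖ := by
      calc ‖F x - F y - A (x - y)‖ ≤ (1 - (q : ℝ)⁻¹) / K * ‖x - y‖ := coe_delta ▸ approx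
        _ ≤ (1 - (q : ℝ)⁻¹) / K * (K * ‖A (x - y)‖) := by
            have : (q : ℝ)⁻¹ ≤ 1 := inv_le_one_of_one_le₀ hq'.le
            gcongr
        _ = (1 - (q : ℝ)⁻¹) * ‖A (x - y)‖ := by field_simp
    have triangle := norm_sub_norm_le (A (x - y)) (F x - F y)
    rw [norm_sub_rev (A (x - y)) (F x - F y)] at triangle
    have : (q : ℝ)⁻¹ * ‖A (x - y)‖ ≤ ‖F x - F y‖ := by linarith
    rwa [inv_mul_le_iff₀ (by positivity)] at this
  rw [map_sub] at key
  rw [edist_nndist, edist_nndist]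
  exact_mod_cast (show dist (A x) (A y) ≤ q * dist (F x) (F y) by simpa [dist_eq_norm] using key)

variable [MeasurableSpace V] [BorelSpace V]

lemma measurable_normDet_fderiv [CompleteSpace W] (F : V → W) :
    Measurable fun x ↦ (fderiv ℝ F x).toLinearMap.normDet := by
  have normDet_eq (A : V →L[ℝ] W) : A.toLinearMap.normDet = √(A.adjoint ∘L A).det := by
    rw [← A.normDet_sq, RCLike.ofReal_real_eq_id, id, Real.sqrt_sq A.toLinearMap.normDet_nonneg]
  have continuous_normDet : Continuous fun A : V →L[ℝ] W ↦ A.toLinearMap.normDet := by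
    simp only [normDet_eq]
    exact (ContinuousLinearMap.continuous_det.comp
      ((ContinuousLinearMap.adjoint.continuous).clm_comp continuous_id)).sqrt
  exact continuous_normDet.measurable.comp (measurable_fderiv ℝ F)

variable [MeasurableSpace W] [BorelSpace W]

lemma exists_ofReal_normDet_mul_hausdorffMeasure_le {A : V →L[ℝ] W} {q : ℝ≥0} (hq : 1 < q) :
    ∃ δ : ℝ≥0, δ ≠ 0 ∧ ∀ (F : V → W) (s : Set V), ApproximatesLinearOn F A s δ →
      ENNReal.ofReal A.toLinearMap.normDet * μH[finrank ℝ V] s ≤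
        (q : ℝ≥0∞) ^ finrank ℝ V * μH[finrank ℝ V] (F '' s) := by
  by_cases hA : A.toLinearMap.ker = ⊥
  · obtain ⟨δ, hδ, edist_le⟩ := exists_edist_le_of_approximatesLinearOn hA hq
    refine ⟨δ, hδ, fun F s hF ↦ ?_⟩
    rw [← A.toLinearMap.hausdorffMeasure_image s]
    simpa using! hausdorffMeasure_image_le_of_edist_le (edist_le F s hF)
      (Nat.cast_nonneg (finrank ℝ V))
  · refine ⟨1, one_ne_zero, fun F s _ ↦ ?_⟩
    simp [LinearMap.normDet_eq_zero_iff_ker_ne_bot.2 hA]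

lemma setLIntegral_le_mul_measure_image_of_iUnion {X Y ι : Type*} [MeasurableSpace X]
    [TopologicalSpace X] [PolishSpace X] [BorelSpace X] [MeasurableSpace Y]
    [TopologicalSpace Y] [T2Space Y] [OpensMeasurableSpace Y] [Countable ι] {μ : Measure X}
    {μ' : Measure Y} {F : X → Y} {s : Set X} {t : ι → Set X} {k : X → ℝ≥0∞} {c : ℝ≥0∞}
    (hs : MeasurableSet s) (hFc : ContinuousOn F s) (hFi : InjOn F s)
    (ht : ∀ i, MeasurableSet (t i)) (htd : Pairwise (Function.onFun Disjoint t))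
    (hst : s ⊆ ⋃ i, t i) (hle : ∀ i, ∫⁻ x in s ∩ t i, k x ∂μ ≤ c * μ' (F '' (s ∩ t i))) :
    ∫⁻ x in s, k x ∂μ ≤ c * μ' (F '' s) := by
  have disjoint_pieces : Pairwise (Function.onFun Disjoint fun i ↦ s ∩ t i) :=
    fun i j hij ↦ (htd hij).mono inter_subset_right inter_subset_right
  have cover : ⋃ i, s ∩ t i = s := by rw [← inter_iUnion, inter_eq_left.2 hst]
  have disjoint_images : Pairwise (Function.onFun Disjoint fun i ↦ F '' (s ∩ t i)) :=
    fun i j hij ↦ (disjoint_pieces hij).image hFi inter_subset_left inter_subset_left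
  have measurable_images (i : ι) : MeasurableSet (F '' (s ∩ t i)) :=
    (hs.inter (ht i)).image_of_continuousOn_injOn (hFc.mono inter_subset_left)
      (hFi.mono inter_subset_left)
  calc ∫⁻ x in s, k x ∂μ = ∑' i, ∫⁻ x in s ∩ t i, k x ∂μ := by
        rw [← lintegral_iUnion (fun i ↦ hs.inter (ht i)) disjoint_pieces, cover]
    _ ≤ ∑' i, c * μ' (F '' (s ∩ t i)) := ENNReal.tsum_le_tsum hle
    _ = c * μ' (F '' s) := by
        rw [ENNReal.tsum_mul_left, ← measure_iUnion disjoint_images measurable_images,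
          ← image_iUnion, cover]

variable [SecondCountableTopology W] {F : V → W} {s : Set V}

lemma lintegral_normDet_fderiv_le_of_mem_Icc (hs : MeasurableSet s)
    (hF : ∀ x ∈ s, DifferentiableAt ℝ F x) (hFi : InjOn F s) {a : ℝ} {q : ℝ≥0}
    (hq : 1 < q) (hsa : ∀ x ∈ s, (fderiv ℝ F x).toLinearMap.normDet ∈ Icc a (q * a)) :
    ∫⁻ x in s, ENNReal.ofReal (fderiv ℝ F x).toLinearMap.normDet ∂μH[finrank ℝ V] ≤
      (q : ℝ≥0∞) ^ (finrank ℝ V + 1) * μH[finrank ℝ V] (F '' s) := by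
  rcases s.eq_empty_or_nonempty with rfl | hs₀
  · simp
  choose δ hδ le_image using fun A : V →L[ℝ] W ↦
    exists_ofReal_normDet_mul_hausdorffMeasure_le (A := A) hq
  obtain ⟨t, A, disjoint, measurable, cover, approx, exists_eq⟩ :=
    exists_partition_approximatesLinearOn_of_hasFDerivWithinAt F s (fderiv ℝ F)
      (fun x hx ↦ (hF x hx).hasFDerivAt.hasFDerivWithinAt) δ hδ
  refine setLIntegral_le_mul_measure_image_of_iUnion hs
    (fun x hx ↦ (hF x hx).continuousAt.continuousWithinAt) hFi measurable disjoint cover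
    fun n ↦ ?_
  obtain ⟨y, hy, hAy⟩ := exists_eq hs₀ n
  calc ∫⁻ x in s ∩ t n, ENNReal.ofReal (fderiv ℝ F x).toLinearMap.normDet ∂μH[finrank ℝ V]
      ≤ ∫⁻ _ in s ∩ t n, ENNReal.ofReal (q * (A n).toLinearMap.normDet) ∂μH[finrank ℝ V] := by
        refine setLIntegral_mono measurable_const fun x hx ↦ ENNReal.ofReal_le_ofReal ?_
        refine (hsa x hx.1).2.trans ?_
        gcongr
        exact hAy ▸ (hsa y hy).1
    _ = q * (ENNReal.ofReal (A n).toLinearMap.normDet * μH[finrank ℝ V] (s ∩ t n)) := by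
        rw [setLIntegral_const, ENNReal.ofReal_mul q.coe_nonneg, ENNReal.ofReal_coe_nnreal,
          mul_assoc]
    _ ≤ q * ((q : ℝ≥0∞) ^ finrank ℝ V * μH[finrank ℝ V] (F '' (s ∩ t n))) := by
        exact mul_le_mul' le_rfl (le_image _ F _ (approx n))
    _ = (q : ℝ≥0∞) ^ (finrank ℝ V + 1) * μH[finrank ℝ V] (F '' (s ∩ t n)) := by ring

variable [CompleteSpace W]

lemma lintegral_normDet_fderiv_le_pow_mul (hs : MeasurableSet s)
    (hF : ∀ x ∈ s, DifferentiableAt ℝ F x) (hFi : InjOn F s) {q : ℝ≥0} (hq : 1 < q) :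
    ∫⁻ x in s, ENNReal.ofReal (fderiv ℝ F x).toLinearMap.normDet ∂μH[finrank ℝ V] ≤
      (q : ℝ≥0∞) ^ (finrank ℝ V + 1) * μH[finrank ℝ V] (F '' s) := by
  set J : V → ℝ := fun x ↦ (fderiv ℝ F x).toLinearMap.normDet
  have hJ : Measurable J := measurable_normDet_fderiv F
  have hq' : (1 : ℝ) < q := hq
  have q_pos : (0 : ℝ) < q := zero_lt_one.trans hq'
  have level_disjoint : Pairwise (Function.onFun Disjoint
      fun k : ℤ ↦ J ⁻¹' Ico ((q : ℝ) ^ k) (q ^ (k + 1))) := fun k l hkl ↦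
    ((zpow_right_mono₀ hq'.le).pairwise_disjoint_on_Ico_succ hkl).preimage J
  have pos_measurable : MeasurableSet (s ∩ J ⁻¹' Ioi 0) := hs.inter (hJ measurableSet_Ioi)
  calc ∫⁻ x in s, ENNReal.ofReal (J x) ∂μH[finrank ℝ V]
      = ∫⁻ x in s ∩ J ⁻¹' Ioi 0, ENNReal.ofReal (J x) ∂μH[finrank ℝ V] := by
        rw [inter_comm, ← setLIntegral_indicator (hJ measurableSet_Ioi)]
        refine setLIntegral_congr_fun hs fun x _ ↦ ?_
        by_cases hx : 0 < J x
        · simp [indicator, hx]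
        · simp [indicator, hx, ENNReal.ofReal_of_nonpos (not_lt.1 hx)]
    _ ≤ (q : ℝ≥0∞) ^ (finrank ℝ V + 1) * μH[finrank ℝ V] (F '' (s ∩ J ⁻¹' Ioi 0)) := by
        refine setLIntegral_le_mul_measure_image_of_iUnion pos_measurable
          (fun x hx ↦ (hF x hx.1).continuousAt.continuousWithinAt)
          (hFi.mono inter_subset_left) (fun k ↦ hJ measurableSet_Ico) level_disjoint
          (fun x hx ↦ mem_iUnion.2 (exists_mem_Ico_zpow hx.2 hq')) fun k ↦ ?_
        refine lintegral_normDet_fderiv_le_of_mem_Icc (pos_measurable.inter (hJ measurableSet_Ico))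
          (fun x hx ↦ hF x hx.1.1) (hFi.mono fun x hx ↦ hx.1.1) hq (a := (q : ℝ) ^ k)
          fun x hx ↦ ⟨hx.2.1, ?_⟩
        rw [← zpow_one_add₀ q_pos.ne', add_comm]
        exact hx.2.2.le
    _ ≤ (q : ℝ≥0∞) ^ (finrank ℝ V + 1) * μH[finrank ℝ V] (F '' s) := by
        gcongr
        exact inter_subset_left

lemma lintegral_normDet_fderiv_le_hausdorffMeasure_image (hs : MeasurableSet s)
    (hF : ∀ x ∈ s, DifferentiableAt ℝ F x) (hFi : InjOn F s) :
    ∫⁻ x in s, ENNReal.ofReal (fderiv ℝ F x).toLinearMap.normDet ∂μH[finrank ℝ V] ≤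
      μH[finrank ℝ V] (F '' s) := by
  have tendsto_pow : Tendsto (fun q : ℝ≥0 ↦ (q : ℝ≥0∞) ^ (finrank ℝ V + 1)) (𝓝[>] 1) (𝓝 1) :=
    ((((ENNReal.continuous_pow _).comp ENNReal.continuous_coe).tendsto' 1 _ (by simp)).mono_left
      nhdsWithin_le_nhds)
  have tendsto_bound : Tendsto (fun q : ℝ≥0 ↦ (q : ℝ≥0∞) ^ (finrank ℝ V + 1) *
      μH[finrank ℝ V] (F '' s)) (𝓝[>] 1) (𝓝 (μH[finrank ℝ V] (F '' s))) := by
    simpa using ENNReal.Tendsto.mul_const tendsto_pow (Or.inl one_ne_zero)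
  exact ge_of_tendsto tendsto_bound (eventually_nhdsWithin_of_forall fun q hq ↦
    lintegral_normDet_fderiv_le_pow_mul hs hF hFi hq)

lemma lintegral_normDet_fderiv_mul_le_lintegral_image (hs : MeasurableSet s)
    (hFc : Continuous F) (hF : ∀ x ∈ s, DifferentiableAt ℝ F x) (hFi : InjOn F s)
    {k : W → ℝ≥0∞} (hk : Measurable k) :
    ∫⁻ x in s, ENNReal.ofReal (fderiv ℝ F x).toLinearMap.normDet * k (F x) ∂μH[finrank ℝ V] ≤
      ∫⁻ y in F '' s, k y ∂μH[finrank ℝ V] := by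
  set J : V → ℝ≥0∞ := fun x ↦ ENNReal.ofReal (fderiv ℝ F x).toLinearMap.normDet
  have hJ : Measurable J := (measurable_normDet_fderiv F).ennreal_ofReal
  have map_le : ((μH[finrank ℝ V].restrict s).withDensity J).map F ≤
      μH[finrank ℝ V].restrict (F '' s) := by
    refine Measure.le_iff.2 fun T hT ↦ ?_
    have hFT : MeasurableSet (F ⁻¹' T) := hFc.measurable hT
    rw [Measure.map_apply hFc.measurable hT, withDensity_apply _ hFT, Measure.restrict_restrict hFT,
      Measure.restrict_apply hT, ← image_preimage_inter]
    exact lintegral_normDet_fderiv_le_hausdorffMeasure_image (hFT.inter hs)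
      (fun x hx ↦ hF x hx.2) (hFi.mono inter_subset_right)
  calc ∫⁻ x in s, J x * k (F x) ∂μH[finrank ℝ V]
      = ∫⁻ x, k (F x) ∂(μH[finrank ℝ V].restrict s).withDensity J :=
        (lintegral_withDensity_eq_lintegral_mul _ hJ (hk.comp hFc.measurable)).symm
    _ = ∫⁻ y, k y ∂((μH[finrank ℝ V].restrict s).withDensity J).map F :=
        (lintegral_map hk hFc.measurable).symm
    _ ≤ ∫⁻ y in F '' s, k y ∂μH[finrank ℝ V] := lintegral_mono' map_le le_rfl

end AreaInequality

section Gauge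

variable {V : Type*} [NormedAddCommGroup V] [NormedSpace ℝ V] {K : Set V}

lemma add_apply_le_of_convexOn_of_hasFDerivAt {f : V → ℝ} (hf : ConvexOn ℝ univ f) {x : V}
    {L : V →L[ℝ] ℝ} (hL : HasFDerivAt f L x) (v : V) : f x + L v ≤ f (x + v) := by
  have convex_line : ConvexOn ℝ univ fun s : ℝ ↦ f (x + s • v) := by
    simpa [Function.comp_def, AffineMap.lineMap_apply_module', add_comm] using
      hf.comp_affineMap (AffineMap.lineMap x (x + v))
  have deriv_line : HasDerivAt (fun s : ℝ ↦ f (x + s • v)) (L v) 0 := hL.hasLineDerivAt v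
  have := convex_line.le_slope_of_hasDerivAt (mem_univ 0) (mem_univ 1) zero_lt_one deriv_line
  simp only [slope_def_field, zero_smul, add_zero, one_smul, sub_zero, div_one] at this
  linarith

lemma convexOn_gauge (hK : Convex ℝ K) (hK₀ : K ∈ 𝓝 0) : ConvexOn ℝ univ (gauge K) := by
  refine ⟨convex_univ, fun x _ y _ a b ha hb _ ↦ ?_⟩
  simpa only [gauge_smul_of_nonneg ha, gauge_smul_of_nonneg hb] using
    gauge_add_le hK (absorbent_nhds_zero hK₀) (a • x) (b • y)

lemma setOf_gauge_lt_eq_smul_interior (hK : Convex ℝ K) (hK₀ : K ∈ 𝓝 0) {t : ℝ} (ht : 0 < t) :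
    {x | gauge K x < t} = t • interior K := by
  ext x
  rw [mem_smul_set_iff_inv_smul_mem₀ ht.ne', ← gauge_lt_one_iff_mem_interior hK hK₀,
    gauge_smul_of_nonneg (inv_nonneg.2 ht.le), smul_eq_mul, inv_mul_lt_iff₀ ht, mul_one,
    mem_ofPred_eq]

lemma gauge_le_gauge_sub_add_hasFDerivAt (hK : Convex ℝ K) (hK₀ : K ∈ 𝓝 0) {x : V}
    {L : V →L[ℝ] ℝ} (hL : HasFDerivAt (gauge K) L x) (v : V) :
    gauge K x ≤ gauge K (x - v) + L v := by
  have := add_apply_le_of_convexOn_of_hasFDerivAt (convexOn_gauge hK hK₀) hL (-v)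
  rw [map_neg, ← sub_eq_add_neg x] at this
  linarith

lemma hasFDerivAt_gauge_apply_le (hK : Convex ℝ K) (hK₀ : K ∈ 𝓝 0) {x : V}
    {L : V →L[ℝ] ℝ} (hL : HasFDerivAt (gauge K) L x) (v : V) : L v ≤ gauge K v := by
  have := add_apply_le_of_convexOn_of_hasFDerivAt (convexOn_gauge hK hK₀) hL v
  linarith [gauge_add_le hK (absorbent_nhds_zero hK₀) x v]

end Gauge

section WulffInequality

lemma setLIntegral_measure_setOf_lt {X : Type*} [MeasurableSpace X] (μ : Measure X)
    [SFinite μ] {p : X → ℝ} (hp : Measurable p) (I : Set ℝ) :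
    ∫⁻ t in I, μ {x | p x < t} = ∫⁻ x, volume.restrict I (Ioi (p x)) ∂μ := by
  have measurable_region : MeasurableSet {q : X × ℝ | p q.1 < q.2} :=
    measurableSet_lt (hp.comp measurable_fst) measurable_snd
  exact (Measure.prod_apply_symm (μ := μ) (ν := volume.restrict I) measurable_region).symm.trans
    (Measure.prod_apply measurable_region)

lemma setLIntegral_le_lintegral_ofReal_of_measure_add_le {X : Type*} [MeasurableSpace X]
    {μ : Measure X} [IsFiniteMeasure μ] {p ψ : X → ℝ} (hp : Measurable p) (hψ : Measurable ψ)
    {I : Set ℝ} (hI : MeasurableSet I) (hI' : volume I ≠ ∞) {c : ℝ → ℝ≥0∞} (hc : Measurable c)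
    (hle : ∀ t ∈ I, μ {x | p x < t} + c t ≤ μ {x | p x - ψ x < t}) :
    ∫⁻ t in I, c t ≤ ∫⁻ x, ENNReal.ofReal (ψ x) ∂μ := by
  have : IsFiniteMeasure (volume.restrict I) := isFiniteMeasure_restrict.2 hI'
  have finite : ∫⁻ x, volume.restrict I (Ioi (p x)) ∂μ ≠ ∞ :=
    ((lintegral_mono fun x ↦ measure_mono (subset_univ (Ioi (p x)))).trans_lt
      (by simpa using ENNReal.mul_lt_top hI'.lt_top (measure_lt_top μ univ))).ne
  have slice_le (x : X) : volume.restrict I (Ioi (p x - ψ x)) ≤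
      volume.restrict I (Ioi (p x)) + ENNReal.ofReal (ψ x) := by
    calc volume.restrict I (Ioi (p x - ψ x))
        ≤ volume.restrict I (Ioi (p x) ∪ Ioc (p x - ψ x) (p x)) :=
          measure_mono fun t ht ↦ (lt_or_ge (p x) t).imp_right fun h ↦ ⟨ht, h⟩
      _ ≤ volume.restrict I (Ioi (p x)) + volume (Ioc (p x - ψ x) (p x)) :=
          (measure_union_le _ _).trans (add_le_add le_rfl (Measure.restrict_apply_le _ _))
      _ = _ := by rw [Real.volume_Ioc, sub_sub_cancel]
  refine (ENNReal.add_le_add_iff_left finite).1 ?_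
  calc ∫⁻ x, volume.restrict I (Ioi (p x)) ∂μ + ∫⁻ t in I, c t
      = ∫⁻ t in I, (μ {x | p x < t} + c t) := by
        rw [lintegral_add_right _ hc, setLIntegral_measure_setOf_lt μ hp]
    _ ≤ ∫⁻ t in I, μ {x | p x - ψ x < t} := setLIntegral_mono' hI hle
    _ = ∫⁻ x, volume.restrict I (Ioi (p x - ψ x)) ∂μ :=
        setLIntegral_measure_setOf_lt μ (hp.sub hψ) I
    _ ≤ ∫⁻ x, (volume.restrict I (Ioi (p x)) + ENNReal.ofReal (ψ x)) ∂μ := lintegral_mono slice_le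
    _ = _ := lintegral_add_right _ hψ.ennreal_ofReal

lemma lintegral_Ioo_ofReal_mul_pow {n : ℕ} (hn : n ≠ 0) {τ : ℝ} (hτ : 0 ≤ τ) :
    ∫⁻ t in Ioo 0 τ, ENNReal.ofReal (n * t ^ (n - 1)) = ENNReal.ofReal (τ ^ n) := by
  have integrable : IntegrableOn (fun t : ℝ ↦ n * t ^ (n - 1)) (Ioo 0 τ) :=
    (Continuous.integrableOn_Icc (by fun_prop)).mono_set Ioo_subset_Icc_self
  have nonneg : ∀ᵐ t : ℝ ∂volume.restrict (Ioo 0 τ), 0 ≤ n * t ^ (n - 1) := by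
    filter_upwards [ae_restrict_mem measurableSet_Ioo] with t ht
    have := ht.1.le
    positivity
  obtain ⟨k, rfl⟩ := Nat.exists_eq_succ_of_ne_zero hn
  rw [← ofReal_integral_eq_lintegral_ofReal integrable nonneg, ← integral_Ioc_eq_integral_Ioo,
    ← intervalIntegral.integral_of_le hτ, intervalIntegral.integral_const_mul, integral_pow]
  simp
  field_simp

variable {V : Type*} [NormedAddCommGroup V] [NormedSpace ℝ V] [FiniteDimensional ℝ V]
  [MeasurableSpace V] [BorelSpace V] {μ : Measure V} [μ.IsAddHaarMeasure] {K W : Set V}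
  {φ : (V →L[ℝ] ℝ) → ℝ} {r C ε t : ℝ}

lemma smul_interior_add_smul_subset_ae (hK : Convex ℝ K) (hK₀ : K ∈ 𝓝 0)
    (hWφ : ∀ z ∈ W, ∀ ℓ : V →L[ℝ] ℝ, ℓ z ≤ φ ℓ) (hWC : ∀ z ∈ W, gauge K z ≤ C) (ht : 0 < t)
    (hε : 0 ≤ ε) (htC : t + ε * C ≤ 1) :
    (t • interior K + ε • W : Set V) ≤ᵐ[μ]
      ({x | gauge K x - ε * φ (fderiv ℝ (gauge K) x) < t} ∩ interior K : Set V) := by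
  obtain ⟨L, lipschitz⟩ := hK.lipschitz_gauge hK₀
  filter_upwards [lipschitz.ae_differentiableAt (μ := μ)] with x hx
  rintro ⟨y, hy, _, ⟨z, hz, rfl⟩, rfl⟩
  rw [← setOf_gauge_lt_eq_smul_interior hK hK₀ ht, mem_ofPred_eq] at hy
  have gauge_smul_le : gauge K (ε • z) ≤ ε * C := by
    rw [gauge_smul_of_nonneg hε, smul_eq_mul]
    exact mul_le_mul_of_nonneg_left (hWC z hz) hε
  have gauge_add := gauge_add_le hK (absorbent_nhds_zero hK₀) y (ε • z)
  have gauge_le := gauge_le_gauge_sub_add_hasFDerivAt hK hK₀ hx.hasFDerivAt (ε • z)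
  rw [add_sub_cancel_right, map_smul, smul_eq_mul] at gauge_le
  have le_phi := mul_le_mul_of_nonneg_left (hWφ z hz (fderiv ℝ (gauge K) (y + ε • z))) hε
  refine ⟨?_, (gauge_lt_one_iff_mem_interior hK hK₀).1 ?_⟩
  · change gauge K (y + ε • z) - ε * φ (fderiv ℝ (gauge K) (y + ε • z)) < t
    linarith
  · change gauge K (y + ε • z) < 1
    linarith

lemma measure_add_mul_measure_le (hK : Convex ℝ K) (hK₀ : K ∈ 𝓝 0) (hW : MeasurableSet W)
    (hr : 0 < r) (hKW : μ (interior K) = ENNReal.ofReal (r ^ finrank ℝ V) * μ W)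
    (hWφ : ∀ z ∈ W, ∀ ℓ : V →L[ℝ] ℝ, ℓ z ≤ φ ℓ) (hWC : ∀ z ∈ W, gauge K z ≤ C) (ht : 0 < t)
    (hε : 0 < ε) (htC : t + ε * C ≤ 1) :
    μ.restrict (interior K) {x | gauge K x < t} +
        ENNReal.ofReal (finrank ℝ V * (t * r) ^ (finrank ℝ V - 1) * ε) * μ W ≤
      μ.restrict (interior K) {x | gauge K x - ε * φ (fderiv ℝ (gauge K) x) < t} := by
  calc μ.restrict (interior K) {x | gauge K x < t} +
        ENNReal.ofReal (finrank ℝ V * (t * r) ^ (finrank ℝ V - 1) * ε) * μ W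
      ≤ μ (t • interior K) +
        ENNReal.ofReal (finrank ℝ V * (t * r) ^ (finrank ℝ V - 1) * ε) * μ W := by
        rw [← setOf_gauge_lt_eq_smul_interior hK hK₀ ht]
        exact add_le_add (Measure.restrict_apply_le _ _) le_rfl
    _ = ENNReal.ofReal ((t * r) ^ finrank ℝ V +
          finrank ℝ V * (t * r) ^ (finrank ℝ V - 1) * ε) * μ W := by
        rw [Measure.addHaar_smul_of_nonneg μ ht.le, hKW, ← mul_assoc,
          ← ENNReal.ofReal_mul (by positivity), ← add_mul, mul_pow,
          ENNReal.ofReal_add (by positivity) (by positivity), mul_pow]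
    _ ≤ ENNReal.ofReal ((t * r + ε) ^ finrank ℝ V) * μ W := by
        gcongr
        exact pow_add_mul_le_add_pow (by positivity) (by positivity) _
    _ ≤ μ (t • interior K + ε • W) :=
        ofReal_add_pow_mul_measure_le μ isOpen_interior hW hr hKW ht hε
    _ ≤ μ ({x | gauge K x - ε * φ (fderiv ℝ (gauge K) x) < t} ∩ interior K) :=
        measure_mono_ae (smul_interior_add_smul_subset_ae hK hK₀ hWφ hWC ht hε.le htC)
    _ ≤ μ.restrict (interior K) {x | gauge K x - ε * φ (fderiv ℝ (gauge K) x) < t} :=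
        Measure.le_restrict_apply _ _

lemma ofReal_pow_mul_measure_le_setLIntegral [Nontrivial V] (hK : Convex ℝ K) (hK₀ : K ∈ 𝓝 0)
    (hW : MeasurableSet W) (hW' : μ W ≠ ∞) (hr : 0 < r)
    (hKW : μ (interior K) = ENNReal.ofReal (r ^ finrank ℝ V) * μ W) (hφ : Measurable φ)
    (hWφ : ∀ z ∈ W, ∀ ℓ : V →L[ℝ] ℝ, ℓ z ≤ φ ℓ) (hWC : ∀ z ∈ W, gauge K z ≤ C) (hε : 0 < ε)
    (hεC : ε * C ≤ 1) :
    ENNReal.ofReal ((1 - ε * C) ^ finrank ℝ V * r ^ (finrank ℝ V - 1)) * μ W ≤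
      ∫⁻ x in interior K, ENNReal.ofReal (φ (fderiv ℝ (gauge K) x)) ∂μ := by
  set ψ : V → ℝ := fun x ↦ φ (fderiv ℝ (gauge K) x)
  have hψ : Measurable ψ := hφ.comp (measurable_fderiv ℝ _)
  have : IsFiniteMeasure (μ.restrict (interior K)) :=
    isFiniteMeasure_restrict.2 (hKW ▸ ENNReal.mul_ne_top ENNReal.ofReal_ne_top hW')
  have layers := setLIntegral_le_lintegral_ofReal_of_measure_add_le
    (continuous_gauge hK hK₀).measurable (hψ.const_mul ε) measurableSet_Ioo
    (by simp : volume (Ioo 0 (1 - ε * C)) ≠ ∞) (by fun_prop) fun t ht ↦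
      measure_add_mul_measure_le hK hK₀ hW hr hKW hWφ hWC ht.1 hε (by linarith [ht.2])
  have integral_layers : ∫⁻ t in Ioo 0 (1 - ε * C),
      ENNReal.ofReal (finrank ℝ V * (t * r) ^ (finrank ℝ V - 1) * ε) * μ W =
        ENNReal.ofReal ε *
          (ENNReal.ofReal ((1 - ε * C) ^ finrank ℝ V * r ^ (finrank ℝ V - 1)) * μ W) := by
    have integrand_eq (t : ℝ) : ENNReal.ofReal (finrank ℝ V * (t * r) ^ (finrank ℝ V - 1) * ε) *
        μ W = ENNReal.ofReal (finrank ℝ V * t ^ (finrank ℝ V - 1)) *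
          (ENNReal.ofReal (r ^ (finrank ℝ V - 1) * ε) * μ W) := by
      rw [← mul_assoc, ← ENNReal.ofReal_mul' (by positivity), mul_pow]
      ring_nf
    simp_rw [integrand_eq]
    rw [lintegral_mul_const _ (by fun_prop), lintegral_Ioo_ofReal_mul_pow finrank_pos.ne'
      (sub_nonneg.2 hεC), ← mul_assoc, ← mul_assoc, ← ENNReal.ofReal_mul' (by positivity),
      ← ENNReal.ofReal_mul hε.le]
    ring_nf
  simp only [integral_layers, ENNReal.ofReal_mul hε.le] at layers
  rw [lintegral_const_mul _ hψ.ennreal_ofReal] at layers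
  exact (ENNReal.mul_le_mul_iff_right (ENNReal.ofReal_pos.2 hε).ne' ENNReal.ofReal_ne_top).1 layers

lemma wulff_inequality [Nontrivial V] (hK : Convex ℝ K) (hK₀ : K ∈ 𝓝 0) (hW : IsCompact W)
    (hr : 0 < r) (hKW : μ (interior K) = ENNReal.ofReal (r ^ finrank ℝ V) * μ W)
    (hφ : Measurable φ) (hWφ : ∀ z ∈ W, ∀ ℓ : V →L[ℝ] ℝ, ℓ z ≤ φ ℓ) :
    ENNReal.ofReal (r ^ (finrank ℝ V - 1)) * μ W ≤
      ∫⁻ x in interior K, ENNReal.ofReal (φ (fderiv ℝ (gauge K) x)) ∂μ := by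
  obtain ⟨C, hC⟩ := (hW.image (continuous_gauge hK hK₀)).bddAbove
  have tendsto_factor : Tendsto (fun ε : ℝ ↦ ENNReal.ofReal
      ((1 - ε * C) ^ finrank ℝ V * r ^ (finrank ℝ V - 1)) * μ W) (𝓝[>] 0)
      (𝓝 (ENNReal.ofReal (r ^ (finrank ℝ V - 1)) * μ W)) := by
    refine ENNReal.Tendsto.mul_const ?_ (Or.inr hW.measure_lt_top.ne)
    refine ENNReal.tendsto_ofReal (Continuous.tendsto' ?_ _ _ ?_ |>.mono_left nhdsWithin_le_nhds)
    · fun_prop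
    · simp
  have eventually_le : ∀ᶠ ε : ℝ in 𝓝[>] 0, ε * C ≤ 1 :=
    nhdsWithin_le_nhds ((continuous_mul_const C).tendsto' 0 0 (zero_mul C) |>.eventually_le_const
      zero_lt_one)
  refine le_of_tendsto tendsto_factor ?_
  filter_upwards [self_mem_nhdsWithin, eventually_le] with ε hε hεC
  exact ofReal_pow_mul_measure_le_setLIntegral hK hK₀ hW.measurableSet hW.measure_lt_top.ne hr hKW
    hφ hWφ (fun z hz ↦ hC (mem_image_of_mem _ hz)) hε hεC

end WulffInequality

section SupportingFunctional

variable {V : Type*} [NormedAddCommGroup V] [NormedSpace ℝ V] [FiniteDimensional ℝ V]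
  {C : Set V} {f : V → ℝ} {x : V}

lemma isOpen_strict_epigraph_of_convexOn_interior (hf : ConvexOn ℝ C f) :
    IsOpen {q : V × ℝ | q.1 ∈ interior C ∧ f q.1 < q.2} := by
  have continuous_gap : ContinuousOn (fun q : V × ℝ ↦ q.2 - f q.1) (interior C ×ˢ univ) :=
    continuousOn_snd.sub (hf.continuousOn_interior.comp continuousOn_fst fun q hq ↦ hq.1)
  convert continuous_gap.isOpen_inter_preimage (isOpen_interior.prod isOpen_univ)
    (isOpen_Ioi (a := 0)) using 1
  ext q
  simp

lemma exists_add_apply_sub_le_on_interior (hf : ConvexOn ℝ C f) (hx : x ∈ interior C) :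
    ∃ ℓ : V →L[ℝ] ℝ, ∀ y ∈ interior C, f x + ℓ (y - x) ≤ f y := by
  obtain ⟨F, hF⟩ := geometric_hahn_banach_open_point
    (hf.subset interior_subset hf.1.interior).convex_strict_epigraph
    (isOpen_strict_epigraph_of_convexOn_interior hf) (x := (x, f x)) fun h ↦ h.2.false
  have F_apply (y : V) (t : ℝ) : F (y, t) = F (y, 0) + t * F (0, 1) := by
    rw [← smul_eq_mul, ← map_smul, ← map_add]
    simp
  have slope_pos : 0 < -F (0, 1) := by
    have := hF (x, f x + 1) ⟨hx, lt_add_one _⟩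
    rw [F_apply, F_apply x (f x)] at this
    linarith
  refine ⟨(-F (0, 1))⁻¹ • F.comp (.inl ℝ V ℝ), fun y hy ↦
    le_of_forall_gt_imp_ge_of_dense fun t ht ↦ ?_⟩
  have := hF (y, t) ⟨hy, ht⟩
  rw [F_apply, F_apply x (f x)] at this
  rw [← le_sub_iff_add_le']
  calc ((-F (0, 1))⁻¹ • F.comp (.inl ℝ V ℝ)) (y - x)
      = (-F (0, 1))⁻¹ * (F (y, 0) - F (x, 0)) := by rw [map_sub, mul_sub]; rfl
    _ ≤ t - f x := (inv_mul_le_iff₀ slope_pos).2 (by linarith)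

lemma exists_add_apply_sub_le_of_mem_interior (hf : ConvexOn ℝ C f) (hx : x ∈ interior C) :
    ∃ ℓ : V →L[ℝ] ℝ, ∀ y ∈ C, f x + ℓ (y - x) ≤ f y := by
  obtain ⟨ℓ, hℓ⟩ := exists_add_apply_sub_le_on_interior hf hx
  refine ⟨ℓ, fun y hy ↦ ?_⟩
  have midpoint_mem : (1 / 2 : ℝ) • x + (1 / 2 : ℝ) • y ∈ interior C :=
    hf.1.combo_interior_self_mem_interior hx hy (by norm_num) (by norm_num) (by norm_num)
  have convexity := hf.2 (interior_subset hx) hy (show (0 : ℝ) ≤ 1 / 2 by norm_num)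
    (show (0 : ℝ) ≤ 1 / 2 by norm_num) (by norm_num)
  have support := hℓ _ midpoint_mem
  rw [show (1 / 2 : ℝ) • x + (1 / 2 : ℝ) • y - x = (1 / 2 : ℝ) • (y - x) by module, map_smul]
    at support
  simp only [smul_eq_mul] at convexity support
  linarith

lemma exists_apply_eq_forall_apply_le_of_homogeneous (hf : ConvexOn ℝ C f)
    (hC : ∀ l : ℝ, 0 < l → ∀ y ∈ C, l • y ∈ C)
    (hhom : ∀ l : ℝ, 0 < l → ∀ y ∈ C, f (l • y) = l * f y) (hx : x ∈ interior C) :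
    ∃ ℓ : V →L[ℝ] ℝ, ℓ x = f x ∧ ∀ y ∈ C, ℓ y ≤ f y := by
  obtain ⟨ℓ, hℓ⟩ := exists_add_apply_sub_le_of_mem_interior hf hx
  have support_along (l : ℝ) (hl : 0 < l) : f x + (l - 1) * ℓ x ≤ l * f x := by
    have := hℓ (l • x) (hC l hl x (interior_subset hx))
    rwa [hhom l hl x (interior_subset hx), show l • x - x = (l - 1) • x by module, map_smul,
      smul_eq_mul] at this
  have ℓ_eq : ℓ x = f x := by
    linarith [support_along 2 two_pos, support_along (1 / 2) one_half_pos]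
  refine ⟨ℓ, ℓ_eq, fun y hy ↦ ?_⟩
  have := hℓ y hy
  rw [map_sub] at this
  linarith

lemma exists_linear_support_of_monotoneOn_fst {g : ℝ × ℝ → ℝ}
    (hg : ConvexOn ℝ (Ici 0 ×ˢ Ici 0) g)
    (hhom : ∀ l : ℝ, 0 < l → ∀ p : ℝ × ℝ, 0 ≤ p.1 → 0 ≤ p.2 → g (l * p.1, l * p.2) = l * g p)
    (hmono : ∀ t : ℝ, 0 ≤ t → MonotoneOn (fun s ↦ g (s, t)) (Ici 0)) {h r : ℝ} (hh : 0 < h)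
    (hr : 0 < r) :
    ∃ α β : ℝ, 0 ≤ α ∧ α * h + β * r = g (h, r) ∧
      ∀ s t, 0 ≤ s → 0 ≤ t → α * s + β * t ≤ g (s, t) := by
  obtain ⟨ℓ, ℓ_eq, ℓ_le⟩ := exists_apply_eq_forall_apply_le_of_homogeneous (x := (h, r)) hg
    (fun l hl p hp ↦ ⟨mul_nonneg hl.le hp.1, mul_nonneg hl.le hp.2⟩)
    (fun l hl p hp ↦ hhom l hl p hp.1 hp.2) (by
      rw [interior_prod_eq, interior_Ici]
      exact ⟨hh, hr⟩)
  have ℓ_apply (s t : ℝ) : ℓ (1, 0) * s + ℓ (0, 1) * t = ℓ (s, t) := by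
    rw [mul_comm, mul_comm _ t, ← smul_eq_mul, ← smul_eq_mul, ← map_smul, ← map_smul, ← map_add]
    simp
  refine ⟨ℓ (1, 0), ℓ (0, 1), ?_, by rw [ℓ_apply, ℓ_eq], fun s t hs ht ↦ ?_⟩
  · have le_zero := ℓ_le (0, r) ⟨self_mem_Ici, hr.le⟩
    have mono := hmono r hr.le self_mem_Ici hh.le hh.le
    refine nonneg_of_mul_nonneg_left ?_ hh
    have := ℓ_apply h r
    have := ℓ_apply 0 r
    simp only at mono
    linarith
  · rw [ℓ_apply]
    exact ℓ_le _ ⟨hs, ht⟩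

end SupportingFunctional

section DivergenceTheorem

variable {V : Type*} [NormedAddCommGroup V] [NormedSpace ℝ V] [FiniteDimensional ℝ V]
  [MeasurableSpace V] [BorelSpace V] {μ : Measure V} [μ.IsAddHaarMeasure] {K : Set V}

lemma integral_fderiv_apply_eq_zero_of_lipschitzWith {f : V → ℝ} {D : ℝ≥0}
    (hf : LipschitzWith D f) (hf' : HasCompactSupport f) (v : V) :
    ∫ x, fderiv ℝ f x v ∂μ = 0 := by
  have integral_lineDeriv : ∫ x, lineDeriv ℝ f x v ∂μ = 0 := by
    simpa [lineDeriv] using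
      ((LipschitzWith.const (α := V) (1 : ℝ)).integral_lineDeriv_mul_eq (μ := μ) hf hf' (-v)).symm
  rw [← integral_lineDeriv]
  refine integral_congr_ae ?_
  filter_upwards [hf.ae_differentiableAt (μ := μ)] with x hx
  exact hx.lineDeriv_eq_fderiv.symm

lemma fderiv_min_gauge_one_ae_eq (hK : Convex ℝ K) (hK₀ : K ∈ 𝓝 0) (hKc : IsClosed K) :
    fderiv ℝ (fun x ↦ min (gauge K x) 1) =ᵐ[μ] (interior K).indicator (fderiv ℝ (gauge K)) := by
  filter_upwards [measure_eq_zero_iff_ae_notMem.1 (hK.addHaar_frontier μ)] with x hx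
  by_cases hxK : x ∈ interior K
  · rw [indicator_of_mem hxK]
    refine EventuallyEq.fderiv_eq ?_
    filter_upwards [isOpen_interior.mem_nhds hxK] with y hy
    exact min_eq_left ((gauge_lt_one_iff_mem_interior hK hK₀).2 hy).le
  · rw [indicator_of_notMem hxK, ← fderiv_const_apply (𝕜 := ℝ) (x := x) (1 : ℝ)]
    refine EventuallyEq.fderiv_eq ?_
    have hxK' : x ∈ Kᶜ := fun h ↦ hx ⟨subset_closure h, hxK⟩
    filter_upwards [hKc.isOpen_compl.mem_nhds hxK'] with y hy
    exact min_eq_right (one_le_gauge_of_notMem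
      (hK.starConvex (mem_of_mem_nhds hK₀)) (absorbent_nhds_zero hK₀ y) hy)

lemma setIntegral_interior_fderiv_gauge_apply_eq_zero (hK : Convex ℝ K) (hK₀ : K ∈ 𝓝 0)
    (hKc : IsCompact K) (v : V) : ∫ x in interior K, fderiv ℝ (gauge K) x v ∂μ = 0 := by
  obtain ⟨D, lipschitz⟩ := hK.lipschitz_gauge hK₀
  have lipschitz_min := (lipschitz.min_const 1).sub (LipschitzWith.const 1)
  have compact_support : HasCompactSupport fun x ↦ min (gauge K x) 1 - 1 := by
    refine HasCompactSupport.intro hKc fun x hx ↦ ?_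
    rw [min_eq_right, sub_self]
    exact one_le_gauge_of_notMem (hK.starConvex (mem_of_mem_nhds hK₀))
      (absorbent_nhds_zero hK₀ x) hx
  rw [← integral_fderiv_apply_eq_zero_of_lipschitzWith (μ := μ) lipschitz_min compact_support v,
    ← integral_indicator isOpen_interior.measurableSet]
  refine integral_congr_ae ?_
  filter_upwards [fderiv_min_gauge_one_ae_eq (μ := μ) hK hK₀ hKc.isClosed] with x hx
  rw [fderiv_sub_const, hx]
  by_cases hxK : x ∈ interior K <;> simp [hxK]

end DivergenceTheorem

section ObliqueGraph

variable {H : Type*} [NormedAddCommGroup H] [InnerProductSpace ℝ H]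

lemma normDet_subtype_add_smulRight_sq {V : Submodule ℝ H} [FiniteDimensional ℝ V] {w : H}
    {e : V} (he : ∀ x : V, ⟪(x : H), w⟫ = ⟪x, e⟫) (l : V) :
    (V.subtype + (innerₛₗ ℝ l).smulRight w).normDet ^ 2 =
      (1 + ⟪l, e⟫) ^ 2 + ‖l‖ ^ 2 * (‖w‖ ^ 2 - ‖e‖ ^ 2) := by
  set b := stdOrthonormalBasis ℝ V
  set P : Matrix (Fin (finrank ℝ V)) (Fin 2) ℝ := Matrix.of fun i ↦ ![⟪l, b i⟫, ⟪b i, e⟫]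
  set Q : Matrix (Fin 2) (Fin (finrank ℝ V)) ℝ :=
    Matrix.of ![fun j ↦ ⟪b j, e⟫ + ‖w‖ ^ 2 * ⟪l, b j⟫, fun j ↦ ⟪l, b j⟫]
  have gram_eq : Matrix.gram ℝ (fun i ↦ (V.subtype + (innerₛₗ ℝ l).smulRight w) (b i)) =
      1 + P * Q := by
    ext i j
    have orthonormal : ⟪(b i : H), (b j : H)⟫ = (1 : Matrix _ _ ℝ) i j := by
      rw [Matrix.one_apply, ← orthonormal_iff_ite.1 b.orthonormal i j, Submodule.coe_inner]
    simp [P, Q, Matrix.mul_apply, Matrix.gram_apply, inner_add_left, inner_add_right,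
      inner_smul_left, inner_smul_right, he, real_inner_comm _ w, orthonormal]
    ring
  have mul_eq : Q * P =
      !![⟪l, e⟫ + ‖w‖ ^ 2 * ‖l‖ ^ 2, ‖e‖ ^ 2 + ‖w‖ ^ 2 * ⟪l, e⟫; ‖l‖ ^ 2, ⟪l, e⟫] := by
    have sum_mul (x y : V) : ∑ i, ⟪b i, x⟫ * ⟪b i, y⟫ = ⟪x, y⟫ := by
      simpa only [real_inner_comm] using b.sum_inner_mul_inner x y
    ext i j
    fin_cases i <;> fin_cases j <;>
      simp [P, Q, Matrix.mul_apply, add_mul, mul_assoc, Finset.sum_add_distrib, ← Finset.mul_sum,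
        real_inner_comm _ l, sum_mul, -Submodule.coe_inner, -Submodule.coe_norm]
  calc (V.subtype + (innerₛₗ ℝ l).smulRight w).normDet ^ 2
      = (1 + P * Q).det := by rw [← gram_eq]; exact LinearMap.normDet_sq_eq_det_gram _ b
    _ = (1 + Q * P).det := Matrix.det_one_add_mul_comm P Q
    _ = (1 + ⟪l, e⟫) ^ 2 + ‖l‖ ^ 2 * (‖w‖ ^ 2 - ‖e‖ ^ 2) := by
      rw [mul_eq, Matrix.det_fin_two]
      simp [-Submodule.coe_inner, -Submodule.coe_norm]
      ring

end ObliqueGraph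

section ConeChart

variable {n : ℕ} {V : Submodule ℝ (EuclideanSpace ℝ (Fin n))} {K : Set V}
  {b c : EuclideanSpace ℝ (Fin n)}

/-- Parametrization, by the points `x` of a direction space `V`, of the lateral surface of the cone
with apex `b` and base `c + K`, `K ⊆ V`. The surface is a graph over `b + V` in the direction
`c - b`, and the height of the graph is the gauge of `K`. -/
noncomputable def coneChart (b c : EuclideanSpace ℝ (Fin n)) (K : Set V) (x : V) :
    EuclideanSpace ℝ (Fin n) :=
  b + x + gauge K x • (c - b)

lemma continuous_coneChart (hK : Convex ℝ K) (hK₀ : K ∈ 𝓝 0) : Continuous (coneChart b c K) := by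
  have := continuous_gauge hK hK₀
  unfold coneChart
  fun_prop

lemma hasFDerivAt_coneChart {x : V} {L : V →L[ℝ] ℝ} (hL : HasFDerivAt (gauge K) L x) :
    HasFDerivAt (coneChart b c K) (V.subtypeL + L.smulRight (c - b)) x :=
  (V.subtypeL.hasFDerivAt.const_add b).add (hL.smul_const (c - b))

lemma exists_gauge_le_of_mem_coneOver {y : EuclideanSpace ℝ (Fin n)}
    (hy : y ∈ coneOver b ((fun z : V ↦ c + z) '' K)) :
    ∃ (x : V) (s : ℝ), gauge K x ≤ s ∧ y = b + x + s • (c - b) := by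
  obtain ⟨t, ⟨ht₀, -⟩, _, ⟨z, hz, rfl⟩, rfl⟩ := hy
  refine ⟨t • z, t, gauge_le_of_mem ht₀ (smul_mem_smul_set hz), ?_⟩
  rw [Submodule.coe_smul]
  module

lemma coneChart_mem_coneOver_frontier (hK : Convex ℝ K) (hK₀ : K ∈ 𝓝 0) {x : V}
    (hx : 0 < gauge K x) (hx' : gauge K x ≤ 1) :
    coneChart b c K x ∈ coneOver b ((fun z : V ↦ c + z) '' frontier K) := by
  refine ⟨gauge K x, ⟨hx.le, hx'⟩, _, mem_image_of_mem _ (?_ : (gauge K x)⁻¹ • x ∈ _), ?_⟩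
  · rw [← gauge_eq_one_iff_mem_frontier hK hK₀, gauge_smul_of_nonneg (inv_nonneg.2 hx.le),
      smul_eq_mul, inv_mul_cancel₀ hx.ne']
  · simp only [coneChart, Submodule.coe_smul, smul_add, smul_inv_smul₀ hx.ne']
    module

lemma coneChart_mem_coneOver_frontier_of_isCompact (hK : Convex ℝ K) (hK₀ : K ∈ 𝓝 0)
    (hKc : IsCompact K) {x : V} (hx : x ∈ K) (hx₀ : x ≠ 0) :
    coneChart b c K x ∈ coneOver b ((fun z : V ↦ c + z) '' frontier K) :=
  coneChart_mem_coneOver_frontier hK hK₀ ((gauge_pos (absorbent_nhds_zero hK₀)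
    (NormedSpace.isVonNBounded_of_isBounded ℝ hKc.isBounded)).2 hx₀) (gauge_le_one_of_mem hx)

lemma coneChart_mem_coneOver (hK : Convex ℝ K) (hK₀ : K ∈ 𝓝 0) (hKc : IsCompact K) {x : V}
    (hx : x ∈ K) : coneChart b c K x ∈ coneOver b ((fun z : V ↦ c + z) '' K) := by
  rcases eq_or_ne x 0 with rfl | hx₀
  · exact ⟨0, by simp, _, mem_image_of_mem _ hx, by simp [coneChart]⟩
  · obtain ⟨t, ht, y, hy, heq⟩ :=
      coneChart_mem_coneOver_frontier_of_isCompact (b := b) (c := c) hK hK₀ hKc hx hx₀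
    exact ⟨t, ht, y, image_mono hKc.isClosed.frontier_subset hy, heq⟩

lemma injective_add_smul_of_notMem {w : EuclideanSpace ℝ (Fin n)} (hw : w ∉ V) :
    Function.Injective (V.subtype.coprod (LinearMap.toSpanSingleton ℝ _ w)) := by
  rw [← LinearMap.ker_eq_bot, LinearMap.ker_eq_bot']
  rintro ⟨x, s⟩ hxs
  replace hxs : (x : EuclideanSpace ℝ (Fin n)) + s • w = 0 := by simpa using hxs
  obtain rfl : s = 0 := by
    by_contra hs
    refine hw ((V.smul_mem_iff hs).1 ?_)
    rw [eq_neg_of_add_eq_zero_right hxs]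
    exact V.neg_mem x.2
  simpa using hxs

lemma exists_continuous_leftInverse_coneChart (hbc : c - b ∉ V) (K : Set V) :
    ∃ P : EuclideanSpace ℝ (Fin n) → V,
      Continuous P ∧ Function.LeftInverse P (coneChart b c K) := by
  obtain ⟨L, hL⟩ := LinearMap.exists_leftInverse_of_injective _
    (LinearMap.ker_eq_bot.2 (injective_add_smul_of_notMem hbc))
  refine ⟨fun y ↦ (L (y - b)).1, ?_, fun x ↦ ?_⟩
  · exact continuous_fst.comp (L.continuous_of_finiteDimensional.comp (by fun_prop))
  · simpa [coneChart, add_assoc] using congrArg Prod.fst (LinearMap.congr_fun hL (x, gauge K x))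

lemma coneChart_mem_frontier (hbc : c - b ∉ V) (hK : Convex ℝ K) (hK₀ : K ∈ 𝓝 0)
    (hKc : IsCompact K) {x : V} (hx : x ∈ K) :
    coneChart b c K x ∈ frontier (coneOver b ((fun z : V ↦ c + z) '' K)) := by
  refine ⟨subset_closure (coneChart_mem_coneOver hK hK₀ hKc hx), fun hint ↦ ?_⟩
  have lower_mem : ∀ᶠ δ : ℝ in 𝓝[>] 0,
      b + x + (gauge K x - δ) • (c - b) ∈ coneOver b ((fun z : V ↦ c + z) '' K) := by
    have hcont : ContinuousAt (fun δ : ℝ ↦ b + x + (gauge K x - δ) • (c - b)) 0 := by fun_prop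
    refine nhdsWithin_le_nhds (hcont.eventually (p := (· ∈ coneOver b _)) ?_)
    simpa [coneChart] using mem_interior_iff_mem_nhds.1 hint
  obtain ⟨δ, hδ, hδ₀⟩ := (lower_mem.and self_mem_nhdsWithin).exists
  obtain ⟨z, s, hzs, heq⟩ := exists_gauge_le_of_mem_coneOver hδ
  have hzx : (x, gauge K x - δ) = (z, s) := injective_add_smul_of_notMem hbc <| by
    simpa [add_assoc] using heq
  obtain ⟨rfl, rfl⟩ := Prod.ext_iff.1 hzx
  linarith [show 0 < δ from hδ₀]

lemma image_frontier_subset_relBoundary {P : Set (EuclideanSpace ℝ (Fin n))}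
    (hP : ∀ z : V, c + z ∈ P) (hK : IsClosed K) :
    (fun z : V ↦ c + z) '' frontier K ⊆ relBoundary P ((fun z : V ↦ c + z) '' K) := by
  rintro _ ⟨z, hz, rfl⟩
  refine ⟨mem_image_of_mem _ (hK.frontier_subset hz), fun ⟨ε, hε, hsub⟩ ↦ hz.2 ?_⟩
  refine mem_interior_iff_mem_nhds.2 (Filter.mem_of_superset (ball_mem_nhds z hε) fun y hy ↦ ?_)
  obtain ⟨y', hy', heq⟩ := hsub ⟨by simpa [dist_eq_norm] using hy, hP y⟩
  rwa [← Subtype.ext (add_left_cancel heq)]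

end ConeChart

section GraphNormal

variable {H : Type*} [NormedAddCommGroup H] [InnerProductSpace ℝ H] {ν : H} {h : ℝ}
  {e l : (ℝ ∙ ν)ᗮ}

/-- The normal, at a point where the function `p` on `ν^⊥` has gradient `l`, of the graph
`{x + p x • (e + h • ν)}` of `p` in the oblique direction `e + h • ν`. It is normalized so that its
norm is the area element of the graph, see `normDet_eq_norm_graphNormal`. -/
noncomputable def graphNormal (ν : H) (h : ℝ) (e l : (ℝ ∙ ν)ᗮ) : H :=
  (1 + ⟪l, e⟫) • ν - h • (l : H)

lemma inner_coe_orthogonal_singleton (x : (ℝ ∙ ν)ᗮ) : ⟪(x : H), ν⟫ = 0 :=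
  Submodule.mem_orthogonal_singleton_iff_inner_left.1 x.2

lemma add_smul_notMem_orthogonal_singleton (hν : ‖ν‖ = 1) (hh : h ≠ 0) (e : (ℝ ∙ ν)ᗮ) :
    (e : H) + h • ν ∉ (ℝ ∙ ν)ᗮ := by
  rw [Submodule.mem_orthogonal_singleton_iff_inner_left, inner_add_left,
    inner_coe_orthogonal_singleton, real_inner_smul_left, real_inner_self_eq_norm_sq, hν]
  simpa using hh

lemma inner_graphNormal_left (hν : ‖ν‖ = 1) : ⟪graphNormal ν h e l, ν⟫ = 1 + ⟪l, e⟫ := by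
  simp only [graphNormal, inner_sub_left, inner_smul_left, inner_coe_orthogonal_singleton,
    real_inner_self_eq_norm_sq, hν, conj_trivial]
  ring

lemma inner_graphNormal_coe (x : (ℝ ∙ ν)ᗮ) : ⟪graphNormal ν h e l, (x : H)⟫ = -(h * ⟪l, x⟫) := by
  simp only [graphNormal, inner_sub_left, inner_smul_left, real_inner_comm (x : H) ν,
    inner_coe_orthogonal_singleton, Submodule.coe_inner, conj_trivial]
  ring

lemma inner_graphNormal_add_smul (hν : ‖ν‖ = 1) :
    ⟪graphNormal ν h e l, (e : H) + h • ν⟫ = h := by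
  rw [inner_add_right, inner_smul_right, inner_graphNormal_coe, inner_graphNormal_left hν]
  ring

lemma continuous_graphNormal : Continuous (graphNormal ν h e) := by
  unfold graphNormal
  fun_prop

lemma graphNormal_ne_zero (hν : ‖ν‖ = 1) (hh : h ≠ 0) : graphNormal ν h e l ≠ 0 := fun h₀ ↦ by
  have := inner_graphNormal_add_smul (h := h) (e := e) (l := l) hν
  simp [h₀, hh.symm] at this

lemma norm_graphNormal_sq (hν : ‖ν‖ = 1) :
    ‖graphNormal ν h e l‖ ^ 2 = (1 + ⟪l, e⟫) ^ 2 + ‖l‖ ^ 2 * h ^ 2 := by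
  conv_lhs => rw [← real_inner_self_eq_norm_sq]; enter [3]; rw [graphNormal]
  rw [inner_sub_right, inner_smul_right, inner_smul_right, inner_graphNormal_left hν,
    inner_graphNormal_coe, real_inner_self_eq_norm_sq]
  ring

lemma normDet_eq_norm_graphNormal [FiniteDimensional ℝ H] (hν : ‖ν‖ = 1) :
    ((ℝ ∙ ν)ᗮ.subtype + (innerₛₗ ℝ l).smulRight (e + h • ν)).normDet = ‖graphNormal ν h e l‖ := by
  have inner_direction (x : (ℝ ∙ ν)ᗮ) : ⟪(x : H), (e : H) + h • ν⟫ = ⟪x, e⟫ := by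
    simp [inner_add_right, inner_smul_right, inner_coe_orthogonal_singleton]
  have norm_direction_sq : ‖(e : H) + h • ν‖ ^ 2 = ‖e‖ ^ 2 + h ^ 2 := by
    rw [norm_add_sq_real, inner_smul_right, inner_coe_orthogonal_singleton, norm_smul, hν]
    simp
  refine (sq_eq_sq₀ (LinearMap.normDet_nonneg _) (norm_nonneg _)).1 ?_
  rw [normDet_subtype_add_smulRight_sq inner_direction, norm_graphNormal_sq hν, norm_direction_sq]
  ring

lemma eq_zero_of_inner_eq_zero_of_inner_add_smul_eq_zero {u : H} (hν : ‖ν‖ = 1) (hh : h ≠ 0)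
    (hu : ∀ x : (ℝ ∙ ν)ᗮ, ⟪u, (x : H)⟫ = 0) (hue : ⟪u, (e : H) + h • ν⟫ = 0) : u = 0 := by
  have hu_mem : u ∈ (ℝ ∙ ν)ᗮᗮ := fun x hx ↦ by rw [real_inner_comm]; exact hu ⟨x, hx⟩
  rw [Submodule.orthogonal_orthogonal] at hu_mem
  obtain ⟨a, rfl⟩ := Submodule.mem_span_singleton.1 hu_mem
  have : a * h = 0 := by
    simpa [inner_add_right, hu e, inner_smul_left, inner_smul_right, real_inner_self_eq_norm_sq, hν,
      mul_comm] using hue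
  simp [(mul_eq_zero.1 this).resolve_right hh]

lemma eq_inv_norm_smul_graphNormal {v : H} (hν : ‖ν‖ = 1) (hh : 0 < h) (hv : ‖v‖ = 1)
    (hv₀ : 0 ≤ ⟪v, (e : H) + h • ν⟫)
    (hvl : ∀ x : (ℝ ∙ ν)ᗮ, ⟪v, (x : H)⟫ + ⟪l, x⟫ * ⟪v, (e : H) + h • ν⟫ = 0) :
    v = ‖graphNormal ν h e l‖⁻¹ • graphNormal ν h e l := by
  set c := ⟪v, (e : H) + h • ν⟫ / h
  have hch : c * h = ⟪v, (e : H) + h • ν⟫ := div_mul_cancel₀ _ hh.ne'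
  have hv_eq : v = c • graphNormal ν h e l := by
    refine sub_eq_zero.1 (eq_zero_of_inner_eq_zero_of_inner_add_smul_eq_zero (e := e) hν hh.ne'
      (fun x ↦ ?_) ?_)
    · rw [inner_sub_left, real_inner_smul_left, inner_graphNormal_coe]
      linear_combination hvl x + ⟪l, x⟫ * hch
    · rw [inner_sub_left, real_inner_smul_left, inner_graphNormal_add_smul hν, hch, sub_self]
  have hc_norm : c * ‖graphNormal ν h e l‖ = 1 := by
    rw [← hv, hv_eq, norm_smul, Real.norm_of_nonneg (div_nonneg hv₀ hh.le)]
  rwa [← eq_inv_of_mul_eq_one_left hc_norm]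

lemma add_le_norm_graphNormal_mul {Φ φ : H → ℝ} {g : ℝ × ℝ → ℝ} {α β : ℝ} (hν : ‖ν‖ = 1)
    (hh : 0 < h) (hφ₀ : ∀ z, ⟪z, ν⟫ = 0 → 0 ≤ φ z)
    (hφ : ∀ t : ℝ, 0 < t → ∀ z, ⟪z, ν⟫ = 0 → φ (t • z) = t * φ z)
    (hΦ : ∀ x, 0 ≤ ⟪x, ν⟫ → g (φ (x - ⟪x, ν⟫ • ν), ⟪x, ν⟫) ≤ Φ x)
    (hαβ : ∀ s t, 0 ≤ s → 0 ≤ t → α * s + β * t ≤ g (s, t)) (hle : 0 ≤ 1 + ⟪l, e⟫) :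
    α * h * φ (-l : (ℝ ∙ ν)ᗮ) + β * (1 + ⟪l, e⟫) ≤
      ‖graphNormal ν h e l‖ * Φ (‖graphNormal ν h e l‖⁻¹ • graphNormal ν h e l) := by
  have norm_pos : 0 < ‖graphNormal ν h e l‖ := norm_pos_iff.2 (graphNormal_ne_zero hν hh.ne')
  set N := ‖graphNormal ν h e l‖
  have normal_part : ⟪N⁻¹ • graphNormal ν h e l, ν⟫ = (1 + ⟪l, e⟫) / N := by
    rw [real_inner_smul_left, inner_graphNormal_left hν, inv_mul_eq_div]
  have tangential_part : N⁻¹ • graphNormal ν h e l - ((1 + ⟪l, e⟫) / N) • ν =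
      (h / N) • ((-l : (ℝ ∙ ν)ᗮ) : H) := by
    rw [graphNormal, Submodule.coe_neg]
    module
  have admissible := hΦ (N⁻¹ • graphNormal ν h e l) (by rw [normal_part]; positivity)
  have hl := inner_coe_orthogonal_singleton (-l)
  rw [normal_part, tangential_part, hφ _ (by positivity) _ hl] at admissible
  rw [← div_le_iff₀' norm_pos]
  calc (α * h * φ (-l : (ℝ ∙ ν)ᗮ) + β * (1 + ⟪l, e⟫)) / N
      = α * (h / N * φ (-l : (ℝ ∙ ν)ᗮ)) + β * ((1 + ⟪l, e⟫) / N) := by ring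
    _ ≤ g (h / N * φ (-l : (ℝ ∙ ν)ᗮ), (1 + ⟪l, e⟫) / N) :=
      hαβ _ _ (mul_nonneg (by positivity) (hφ₀ _ hl)) (by positivity)
    _ ≤ Φ (N⁻¹ • graphNormal ν h e l) := admissible

end GraphNormal

section LateralSurface

variable {n : ℕ} {ν : EuclideanSpace ℝ (Fin n)} {h : ℝ} {e : (ℝ ∙ ν)ᗮ} {K : Set (ℝ ∙ ν)ᗮ}

lemma one_add_inner_gradient_gauge_nonneg (hK : Convex ℝ K) (hK₀ : K ∈ 𝓝 0) (he : -e ∈ K)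
    (x : (ℝ ∙ ν)ᗮ) : 0 ≤ 1 + ⟪gradient (gauge K) x, e⟫ := by
  by_cases hx : DifferentiableAt ℝ (gauge K) x
  · have := (hasFDerivAt_gauge_apply_le hK hK₀ hx.hasGradientAt.hasFDerivAt (-e)).trans
      (gauge_le_one_of_mem he)
    simp only [map_neg, InnerProductSpace.toDual_apply_apply] at this
    linarith
  · simp [gradient_eq_zero_of_not_differentiableAt hx]

lemma eq_inv_norm_smul_graphNormal_of_isInnerNormalAt (hν : ‖ν‖ = 1) (hh : 0 < h)
    (hK : Convex ℝ K) (hK₀ : K ∈ 𝓝 0) (hKc : IsCompact K) {x l : (ℝ ∙ ν)ᗮ} (hx : x ∈ interior K)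
    (hl : HasGradientAt (gauge K) l x) {v : EuclideanSpace ℝ (Fin n)}
    (hv : IsInnerNormalAt (coneOver (-(h • ν)) ((fun z : (ℝ ∙ ν)ᗮ ↦ e + z) '' K))
      (coneChart (-(h • ν)) e K x) v) :
    v = ‖graphNormal ν h e l‖⁻¹ • graphNormal ν h e l := by
  obtain ⟨hv_norm, hv_nonneg⟩ := hv
  have top_nonneg : 0 ≤ (1 - gauge K x) * ⟪v, (e : EuclideanSpace ℝ (Fin n)) + h • ν⟫ := by
    rw [← real_inner_smul_right]
    convert hv_nonneg _ ⟨1, by simp, _, mem_image_of_mem _ (interior_subset hx), rfl⟩ using 2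
    simp only [coneChart]
    module
  refine eq_inv_norm_smul_graphNormal hν hh hv_norm
    (nonneg_of_mul_nonneg_right top_nonneg
      (sub_pos.2 ((gauge_lt_one_iff_mem_interior hK hK₀).2 hx))) fun y ↦ ?_
  have isLocalMin : IsLocalMin (fun z : (ℝ ∙ ν)ᗮ ↦ ⟪v, (z : EuclideanSpace ℝ (Fin n))⟫ +
      gauge K z * ⟪v, (e : EuclideanSpace ℝ (Fin n)) + h • ν⟫) x := by
    filter_upwards [mem_interior_iff_mem_nhds.1 hx] with z hz
    have := hv_nonneg _ (coneChart_mem_coneOver hK hK₀ hKc hz)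
    simp only [coneChart, sub_neg_eq_add, inner_sub_right, inner_add_right (𝕜 := ℝ) v (_ + _),
      inner_add_right (𝕜 := ℝ) v (-_), real_inner_smul_right (x := v)] at this
    linarith
  have hasFDerivAt := (((innerSL ℝ v).comp (ℝ ∙ ν)ᗮ.subtypeL).hasFDerivAt (x := x)).add
    (hl.hasFDerivAt.mul_const ⟪v, (e : EuclideanSpace ℝ (Fin n)) + h • ν⟫)
  have := DFunLike.congr_fun (isLocalMin.hasFDerivAt_eq_zero hasFDerivAt) y
  simpa [mul_comm] using this

lemma measurable_gradient {F : Type*} [NormedAddCommGroup F] [InnerProductSpace ℝ F]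
    [CompleteSpace F] [MeasurableSpace F] [BorelSpace F] (f : F → ℝ) :
    Measurable (gradient f) :=
  (InnerProductSpace.toDual ℝ F).symm.continuous.measurable.comp (measurable_fderiv ℝ f)

lemma normDet_fderiv_coneChart (hν : ‖ν‖ = 1) {x l : (ℝ ∙ ν)ᗮ}
    (hl : HasGradientAt (gauge K) l x) :
    (fderiv ℝ (coneChart (-(h • ν)) e K) x).toLinearMap.normDet = ‖graphNormal ν h e l‖ := by
  rw [(hasFDerivAt_coneChart hl.hasFDerivAt).fderiv, ← normDet_eq_norm_graphNormal hν,
    sub_neg_eq_add]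
  rfl

lemma setLIntegral_norm_graphNormal_mul_le_lintegral_image (hν : ‖ν‖ = 1) (hh : h ≠ 0)
    (hK : Convex ℝ K) (hK₀ : K ∈ 𝓝 0) {s : Set (ℝ ∙ ν)ᗮ} (hs : MeasurableSet s)
    (hsK : ∀ x ∈ s, DifferentiableAt ℝ (gauge K) x) {k : EuclideanSpace ℝ (Fin n) → ℝ≥0∞}
    (hk : Measurable k) :
    ∫⁻ x in s, ENNReal.ofReal ‖graphNormal ν h e (gradient (gauge K) x)‖ *
        k (coneChart (-(h • ν)) e K x) ∂μH[finrank ℝ (ℝ ∙ ν)ᗮ] ≤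
      ∫⁻ y in coneChart (-(h • ν)) (e : EuclideanSpace ℝ (Fin n)) K '' s, k y
        ∂μH[finrank ℝ (ℝ ∙ ν)ᗮ] := by
  obtain ⟨P, -, hP⟩ := exists_continuous_leftInverse_coneChart (b := -(h • ν)) (c := e)
    (by simpa using add_smul_notMem_orthogonal_singleton hν hh e) K
  refine le_of_eq_of_le (setLIntegral_congr_fun hs fun x hx ↦ ?_)
    (lintegral_normDet_fderiv_mul_le_lintegral_image hs (continuous_coneChart hK hK₀)
      (fun x hx ↦ (hasFDerivAt_coneChart (hsK x hx).hasFDerivAt).differentiableAt)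
      hP.injective.injOn hk)
  rw [normDet_fderiv_coneChart hν (hsK x hx).hasGradientAt]

lemma diff_singleton_inter_differentiableAt_gauge_ae_eq [Nontrivial (ℝ ∙ ν)ᗮ] (hK : Convex ℝ K)
    (hK₀ : K ∈ 𝓝 0) (s : Set (ℝ ∙ ν)ᗮ) :
    (s \ {0} ∩ {x | DifferentiableAt ℝ (gauge K) x} : Set (ℝ ∙ ν)ᗮ)
      =ᵐ[μH[finrank ℝ (ℝ ∙ ν)ᗮ]] s := by
  obtain ⟨D, hD⟩ := hK.lipschitz_gauge hK₀
  filter_upwards [hD.ae_differentiableAt (μ := μH[finrank ℝ (ℝ ∙ ν)ᗮ]),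
    Measure.ae_ne μH[finrank ℝ (ℝ ∙ ν)ᗮ] 0] with x hx hx₀
  exact propext ⟨fun hxs ↦ hxs.1.1, fun hxs ↦ ⟨⟨hxs, hx₀⟩, hx⟩⟩

lemma ae_restrict_image_coneChart_eq_inv_norm_smul (hν : ‖ν‖ = 1) (hh : 0 < h)
    (hK : Convex ℝ K) (hK₀ : K ∈ 𝓝 0) (hKc : IsCompact K)
    {νC : EuclideanSpace ℝ (Fin n) → EuclideanSpace ℝ (Fin n)}
    (hνC : ∀ᵐ y ∂(μH[finrank ℝ (ℝ ∙ ν)ᗮ].restrict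
        (frontier (coneOver (-(h • ν)) ((fun z : (ℝ ∙ ν)ᗮ ↦ e + z) '' K)))),
      IsInnerNormalAt (coneOver (-(h • ν)) ((fun z : (ℝ ∙ ν)ᗮ ↦ e + z) '' K)) y (νC y))
    {s : Set (ℝ ∙ ν)ᗮ} (hs : MeasurableSet s) (hs_int : s ⊆ interior K)
    (hsK : ∀ x ∈ s, DifferentiableAt ℝ (gauge K) x) :
    ∀ᵐ y ∂(μH[finrank ℝ (ℝ ∙ ν)ᗮ].restrict
        (coneChart (-(h • ν)) (e : EuclideanSpace ℝ (Fin n)) K '' s)),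
      ∃ x, coneChart (-(h • ν)) e K x = y ∧
        νC y = ‖graphNormal ν h e (gradient (gauge K) x)‖⁻¹ •
          graphNormal ν h e (gradient (gauge K) x) := by
  have hbc : (e : EuclideanSpace ℝ (Fin n)) - -(h • ν) ∉ (ℝ ∙ ν)ᗮ := by
    simpa using add_smul_notMem_orthogonal_singleton hν hh.ne' e
  obtain ⟨P, -, hP⟩ := exists_continuous_leftInverse_coneChart hbc K
  have image_subset : coneChart (-(h • ν)) (e : EuclideanSpace ℝ (Fin n)) K '' s ⊆
      frontier (coneOver (-(h • ν)) ((fun z : (ℝ ∙ ν)ᗮ ↦ e + z) '' K)) :=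
    image_subset_iff.2 fun x hx ↦
      coneChart_mem_frontier hbc hK hK₀ hKc (interior_subset (hs_int hx))
  filter_upwards [ae_restrict_of_ae_restrict_of_subset image_subset hνC,
    ae_restrict_mem (hs.image_of_continuousOn_injOn (continuous_coneChart hK hK₀).continuousOn
      hP.injective.injOn)] with _ hy ⟨x, hx, hxy⟩
  subst hxy
  exact ⟨x, rfl, eq_inv_norm_smul_graphNormal_of_isInnerNormalAt hν hh hK hK₀ hKc (hs_int hx)
    (hsK x hx).hasGradientAt hy⟩

lemma setLIntegral_interior_le_lintegral_coneOver [Nontrivial (ℝ ∙ ν)ᗮ] (hν : ‖ν‖ = 1) (hh : 0 < h)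
    (hK : Convex ℝ K) (hK₀ : K ∈ 𝓝 0) (hKc : IsCompact K)
    {νC : EuclideanSpace ℝ (Fin n) → EuclideanSpace ℝ (Fin n)}
    (hνC : ∀ᵐ y ∂(μH[finrank ℝ (ℝ ∙ ν)ᗮ].restrict
        (frontier (coneOver (-(h • ν)) ((fun z : (ℝ ∙ ν)ᗮ ↦ e + z) '' K)))),
      IsInnerNormalAt (coneOver (-(h • ν)) ((fun z : (ℝ ∙ ν)ᗮ ↦ e + z) '' K)) y (νC y))
    {f : (ℝ ∙ ν)ᗮ → ℝ≥0∞} (hf : Measurable f) {G : EuclideanSpace ℝ (Fin n) → ℝ≥0∞}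
    (hfG : ∀ x, f x ≤ ENNReal.ofReal ‖graphNormal ν h e (gradient (gauge K) x)‖ *
      G (‖graphNormal ν h e (gradient (gauge K) x)‖⁻¹ • graphNormal ν h e (gradient (gauge K) x))) :
    ∫⁻ x in interior K, f x ∂μH[finrank ℝ (ℝ ∙ ν)ᗮ] ≤
      ∫⁻ y in coneOver (-(h • ν)) ((fun z : (ℝ ∙ ν)ᗮ ↦ e + z) '' frontier K),
        G (νC y) ∂μH[finrank ℝ (ℝ ∙ ν)ᗮ] := by
  set F := coneChart (-(h • ν)) (e : EuclideanSpace ℝ (Fin n)) K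
  set N := fun x ↦ graphNormal ν h e (gradient (gauge K) x)
  set s := interior K \ {0} ∩ {x | DifferentiableAt ℝ (gauge K) x}
  have hs : MeasurableSet s :=
    (isOpen_interior.measurableSet.diff (measurableSet_singleton 0)).inter
      (measurableSet_of_differentiableAt ℝ (gauge K))
  obtain ⟨P, hP, hPF⟩ := exists_continuous_leftInverse_coneChart (b := -(h • ν)) (c := e)
    (by simpa using add_smul_notMem_orthogonal_singleton hν hh.ne' e) K
  have hN : Measurable fun x ↦ ENNReal.ofReal ‖N x‖ :=
    (continuous_graphNormal.measurable.comp (measurable_gradient _)).norm.ennreal_ofReal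
  have hN_ne_zero (x) : ENNReal.ofReal ‖N x‖ ≠ 0 := by
    simpa using graphNormal_ne_zero hν hh.ne'
  have div_le : ∀ᵐ y ∂(μH[finrank ℝ (ℝ ∙ ν)ᗮ].restrict (F '' s)),
      f (P y) / ENNReal.ofReal ‖N (P y)‖ ≤ G (νC y) := by
    filter_upwards [ae_restrict_image_coneChart_eq_inv_norm_smul hν hh hK hK₀ hKc hνC hs
      (fun x hx ↦ hx.1.1) fun x hx ↦ hx.2] with _ ⟨x, hxy, hx⟩
    rw [hx, ← hxy, hPF]
    exact ENNReal.div_le_of_le_mul' (hfG x)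
  calc ∫⁻ x in interior K, f x ∂μH[finrank ℝ (ℝ ∙ ν)ᗮ]
      = ∫⁻ x in s, f x ∂μH[finrank ℝ (ℝ ∙ ν)ᗮ] :=
      (setLIntegral_congr
        (diff_singleton_inter_differentiableAt_gauge_ae_eq hK hK₀ (interior K))).symm
    _ = ∫⁻ x in s, ENNReal.ofReal ‖N x‖ *
          (f (P (F x)) / ENNReal.ofReal ‖N (P (F x))‖) ∂μH[finrank ℝ (ℝ ∙ ν)ᗮ] := by
      refine lintegral_congr fun x ↦ ?_
      rw [hPF, ENNReal.mul_div_cancel (hN_ne_zero x) ENNReal.ofReal_ne_top]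
    _ ≤ ∫⁻ y in F '' s, f (P y) / ENNReal.ofReal ‖N (P y)‖ ∂μH[finrank ℝ (ℝ ∙ ν)ᗮ] :=
      setLIntegral_norm_graphNormal_mul_le_lintegral_image hν hh.ne' hK hK₀ hs (fun x hx ↦ hx.2)
        ((hf.div hN).comp hP.measurable)
    _ ≤ ∫⁻ y in F '' s, G (νC y) ∂μH[finrank ℝ (ℝ ∙ ν)ᗮ] := lintegral_mono_ae div_le
    _ ≤ ∫⁻ y in coneOver (-(h • ν)) ((fun z : (ℝ ∙ ν)ᗮ ↦ e + z) '' frontier K),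
        G (νC y) ∂μH[finrank ℝ (ℝ ∙ ν)ᗮ] := lintegral_mono_set <| image_subset_iff.2 fun x hx ↦
      coneChart_mem_coneOver_frontier_of_isCompact hK hK₀ hKc (interior_subset hx.1.1) hx.1.2

end LateralSurface

section WulffShape

lemma exists_mul_norm_le_of_forall_pos {V : Type*} [NormedAddCommGroup V] [NormedSpace ℝ V]
    [FiniteDimensional ℝ V] {f : V → ℝ} (hf : Continuous f)
    (hf_hom : ∀ t : ℝ, 0 < t → ∀ x, f (t • x) = t * f x) (hf_pos : ∀ x, x ≠ 0 → 0 < f x) :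
    ∃ c > 0, ∀ x, c * ‖x‖ ≤ f x := by
  have hf₀ : f 0 = 0 := by linarith [smul_zero (M := ℝ) (A := V) 2 ▸ hf_hom 2 two_pos 0]
  obtain ⟨c, hc, hcf⟩ := (isCompact_sphere (0 : V) 1).exists_forall_le' hf.continuousOn
    fun x hx ↦ hf_pos x (ne_zero_of_mem_unit_sphere ⟨x, hx⟩)
  refine ⟨c, hc, fun x ↦ ?_⟩
  rcases eq_or_ne x 0 with rfl | hx
  · simp [hf₀]
  · have norm_pos : 0 < ‖x‖ := norm_pos_iff.2 hx
    calc c * ‖x‖ ≤ f (‖x‖⁻¹ • x) * ‖x‖ := by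
          gcongr
          exact hcf _ (by simp [norm_smul, norm_pos.ne'])
      _ = f x := by rw [mul_comm, ← hf_hom _ norm_pos, smul_inv_smul₀ norm_pos.ne']

lemma isCompact_setOf_forall_inner_le {V : Type*} [NormedAddCommGroup V] [InnerProductSpace ℝ V]
    [FiniteDimensional ℝ V] {f : V → ℝ} (hf : Continuous f) :
    IsCompact {z : V | ∀ y, ⟪y, z⟫ ≤ f y} := by
  obtain ⟨M, hM⟩ := (isCompact_sphere (0 : V) 1).bddAbove_image hf.continuousOn
  refine Metric.isCompact_of_isClosed_isBounded ?_
    ((isBounded_closedBall (x := 0) (r := max M 0)).subset fun z hz ↦ ?_)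
  · simp only [ofPred_forall]
    exact isClosed_iInter fun y ↦ isClosed_le (by fun_prop) continuous_const
  · rw [mem_closedBall_zero_iff]
    rcases eq_or_ne z 0 with rfl | hz₀
    · simp
    · have norm_ne_zero : ‖z‖ ≠ 0 := norm_ne_zero_iff.2 hz₀
      calc ‖z‖ = ⟪‖z‖⁻¹ • z, z⟫ := by
            rw [real_inner_smul_left, real_inner_self_eq_norm_sq, sq,
              inv_mul_cancel_left₀ norm_ne_zero]
        _ ≤ f (‖z‖⁻¹ • z) := hz _
        _ ≤ M := hM (mem_image_of_mem f (by simp [norm_smul, norm_ne_zero]))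
        _ ≤ max M 0 := le_max_left _ _

variable {n : ℕ} {ν : EuclideanSpace ℝ (Fin n)} {φ : EuclideanSpace ℝ (Fin n) → ℝ}

lemma continuous_comp_coe_of_convexOn (hφ : ConvexOn ℝ {z | ⟪z, ν⟫ = 0} φ) :
    Continuous fun y : (ℝ ∙ ν)ᗮ ↦ φ y := by
  have convexOn : ConvexOn ℝ univ fun y : (ℝ ∙ ν)ᗮ ↦ φ y :=
    (hφ.comp_linearMap (ℝ ∙ ν)ᗮ.subtype).subset
      (fun y _ ↦ inner_coe_orthogonal_singleton y) convex_univ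
  exact convexOn.locallyLipschitz.continuous

lemma eq_zero_of_forall_smul_eq
    (hφ_hom : ∀ t : ℝ, 0 < t → ∀ z, ⟪z, ν⟫ = 0 → φ (t • z) = t * φ z) : φ 0 = 0 := by
  have := hφ_hom 2 two_pos 0 (inner_zero_left ν)
  rw [smul_zero] at this
  linarith

lemma nonneg_of_forall_pos (hφ_hom : ∀ t : ℝ, 0 < t → ∀ z, ⟪z, ν⟫ = 0 → φ (t • z) = t * φ z)
    (hφ_pos : ∀ z, ⟪z, ν⟫ = 0 → z ≠ 0 → 0 < φ z) {z : EuclideanSpace ℝ (Fin n)}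
    (hz : ⟪z, ν⟫ = 0) : 0 ≤ φ z := by
  rcases eq_or_ne z 0 with rfl | hz₀
  · exact (eq_zero_of_forall_smul_eq hφ_hom).ge
  · exact (hφ_pos z hz hz₀).le

lemma bddAbove_inner_setOf_lt_one
    (hφ_hom : ∀ t : ℝ, 0 < t → ∀ z, ⟪z, ν⟫ = 0 → φ (t • z) = t * φ z)
    (hφ : ConvexOn ℝ {z | ⟪z, ν⟫ = 0} φ) (hφ_pos : ∀ z, ⟪z, ν⟫ = 0 → z ≠ 0 → 0 < φ z)
    (z : EuclideanSpace ℝ (Fin n)) :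
    BddAbove {s : ℝ | ∃ w : EuclideanSpace ℝ (Fin n), ⟪w, ν⟫ = 0 ∧ φ w < 1 ∧ s = ⟪z, w⟫} := by
  obtain ⟨c, hc, hcφ⟩ := exists_mul_norm_le_of_forall_pos (continuous_comp_coe_of_convexOn hφ)
    (fun t ht y ↦ hφ_hom t ht y (inner_coe_orthogonal_singleton y))
    (fun y hy ↦ hφ_pos y (inner_coe_orthogonal_singleton y) (by simpa using hy))
  refine ⟨‖z‖ * (1 / c), ?_⟩
  rintro _ ⟨w, hw, hφw, rfl⟩
  have norm_le : ‖w‖ ≤ 1 / c := by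
    rw [le_div_iff₀' hc]
    exact (hcφ ⟨w, Submodule.mem_orthogonal_singleton_iff_inner_left.2 hw⟩).trans hφw.le
  exact (real_inner_le_norm z w).trans (by gcongr)

lemma coe_mem_wulffShape_iff
    (hφ_hom : ∀ t : ℝ, 0 < t → ∀ z, ⟪z, ν⟫ = 0 → φ (t • z) = t * φ z)
    (hφ : ConvexOn ℝ {z | ⟪z, ν⟫ = 0} φ) (hφ_pos : ∀ z, ⟪z, ν⟫ = 0 → z ≠ 0 → 0 < φ z)
    {z : (ℝ ∙ ν)ᗮ} :
    (z : EuclideanSpace ℝ (Fin n)) ∈ wulffShape ν φ ↔ ∀ y : (ℝ ∙ ν)ᗮ, ⟪y, z⟫ ≤ φ y := by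
  constructor
  · rintro ⟨-, hz⟩ y
    refine le_of_forall_pos_le_add fun ε hε ↦ ?_
    have hy := inner_coe_orthogonal_singleton y
    have add_pos : 0 < φ y + ε := by linarith [nonneg_of_forall_pos hφ_hom hφ_pos hy]
    have inner_le_one : ⟪(z : EuclideanSpace ℝ (Fin n)), (φ y + ε)⁻¹ • (y : _)⟫ ≤ 1 := by
      refine (le_csSup (bddAbove_inner_setOf_lt_one hφ_hom hφ hφ_pos z) ⟨_, ?_, ?_, rfl⟩).trans hz
      · rw [real_inner_smul_left, hy, mul_zero]
      · rw [hφ_hom _ (inv_pos.2 add_pos) _ hy, inv_mul_lt_iff₀ add_pos]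
        linarith
    rwa [real_inner_smul_right, inv_mul_le_iff₀ add_pos, mul_one, real_inner_comm] at inner_le_one
  · refine fun hz ↦
      ⟨inner_coe_orthogonal_singleton z, csSup_le ⟨0, 0, inner_zero_left ν, ?_, ?_⟩ ?_⟩
    · simp [eq_zero_of_forall_smul_eq hφ_hom]
    · rw [inner_zero_right]
    · rintro _ ⟨w, hw, hφw, rfl⟩
      rw [real_inner_comm]
      exact (hz ⟨w, Submodule.mem_orthogonal_singleton_iff_inner_left.2 hw⟩).trans hφw.le

lemma isCompact_preimage_coe_wulffShape
    (hφ_hom : ∀ t : ℝ, 0 < t → ∀ z, ⟪z, ν⟫ = 0 → φ (t • z) = t * φ z)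
    (hφ : ConvexOn ℝ {z | ⟪z, ν⟫ = 0} φ) (hφ_pos : ∀ z, ⟪z, ν⟫ = 0 → z ≠ 0 → 0 < φ z) :
    IsCompact ((↑) ⁻¹' wulffShape ν φ : Set (ℝ ∙ ν)ᗮ) := by
  have preimage_eq : ((↑) ⁻¹' wulffShape ν φ : Set (ℝ ∙ ν)ᗮ) =
      {z : (ℝ ∙ ν)ᗮ | ∀ y : (ℝ ∙ ν)ᗮ, ⟪y, z⟫ ≤ φ y} :=
    Set.ext fun z ↦ coe_mem_wulffShape_iff hφ_hom hφ hφ_pos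
  exact preimage_eq ▸ isCompact_setOf_forall_inner_le (continuous_comp_coe_of_convexOn hφ)

end WulffShape

section Submodule

variable {n : ℕ} {V : Submodule ℝ (EuclideanSpace ℝ (Fin n))} {E : Set (EuclideanSpace ℝ (Fin n))}

lemma hausdorffMeasure_preimage_coe {d : ℝ} (hd : 0 ≤ d) (hE : E ⊆ V) :
    μH[d] ((↑) ⁻¹' E : Set V) = μH[d] E := by
  rw [isometry_subtype_coe.hausdorffMeasure_preimage (.inl hd), Subtype.range_coe,
    inter_eq_left.2 hE]

lemma interior_preimage_coe_nonempty (hE : Convex ℝ E) (hEV : E ⊆ V)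
    (hspan : affineSpan ℝ E = affineSpan ℝ (V : Set (EuclideanSpace ℝ (Fin n)))) :
    (interior ((↑) ⁻¹' E : Set V)).Nonempty := by
  have convex_preimage : Convex ℝ ((↑) ⁻¹' E : Set V) := hE.linear_preimage V.subtype
  rw [convex_preimage.interior_nonempty_iff_affineSpan_eq_top, eq_top_iff]
  intro x _
  have map_eq := AffineSubspace.map_span V.subtype.toAffineMap ((↑) ⁻¹' E : Set V)
  have image_eq : V.subtype.toAffineMap '' ((↑) ⁻¹' E) = E :=
    image_preimage_eq_of_subset (by simpa using hEV)
  rw [image_eq, hspan] at map_eq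
  obtain ⟨y, hy, hyx⟩ := map_eq.ge (subset_affineSpan ℝ _ x.2)
  exact Subtype.coe_injective hyx ▸ hy

end Submodule

section GradientIntegrals

variable {V : Type*} [NormedAddCommGroup V] [InnerProductSpace ℝ V] [FiniteDimensional ℝ V]
  [MeasurableSpace V] [BorelSpace V] {μ : Measure V} {K : Set V} {f : V → ℝ}

lemma ofReal_integral_le_lintegral_ofReal {X : Type*} [MeasurableSpace X] {μ : Measure X}
    {f : X → ℝ} (hf : Integrable f μ) :
    ENNReal.ofReal (∫ x, f x ∂μ) ≤ ∫⁻ x, ENNReal.ofReal (f x) ∂μ := by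
  rw [integral_eq_lintegral_pos_part_sub_lintegral_neg_part hf]
  exact (ENNReal.ofReal_le_ofReal (sub_le_self _ ENNReal.toReal_nonneg)).trans
    ENNReal.ofReal_toReal_le

lemma integrableOn_comp_gradient_gauge (hK : Convex ℝ K) (hK₀ : K ∈ 𝓝 0) (hf : Continuous f)
    {s : Set V} (hs : μ s ≠ ∞) : IntegrableOn (fun x ↦ f (gradient (gauge K) x)) s μ := by
  obtain ⟨D, lipschitz⟩ := hK.lipschitz_gauge hK₀
  obtain ⟨M, hM⟩ := (isCompact_closedBall (0 : V) D).exists_bound_of_continuousOn hf.continuousOn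
  refine .of_bound hs.lt_top (hf.measurable.comp (measurable_gradient _)).aestronglyMeasurable M
    (.of_forall fun x ↦ hM _ ?_)
  rw [mem_closedBall_zero_iff, gradient, LinearIsometryEquiv.norm_map]
  exact norm_fderiv_le_of_lipschitz ℝ lipschitz

variable [μ.IsAddHaarMeasure]

lemma measure_interior_of_convex (hK : Convex ℝ K) : μ (interior K) = μ K :=
  measure_congr (interior_ae_eq_of_null_frontier (hK.addHaar_frontier μ))

lemma setIntegral_interior_one_add_inner_gradient_gauge (hK : Convex ℝ K) (hK₀ : K ∈ 𝓝 0)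
    (hKc : IsCompact K) (e : V) :
    ∫ x in interior K, (1 + ⟪gradient (gauge K) x, e⟫) ∂μ = μ.real K := by
  have hK_int : μ (interior K) ≠ ∞ := measure_interior_of_convex (μ := μ) hK ▸ hKc.measure_lt_top.ne
  rw [integral_add (integrableOn_const hK_int).integrable
    (integrableOn_comp_gradient_gauge hK hK₀ (by fun_prop : Continuous fun v ↦ ⟪v, e⟫) hK_int)]
  simp [gradient, InnerProductSpace.toDual_symm_apply, measureReal_def,
    measure_interior_of_convex hK, setIntegral_interior_fderiv_gauge_apply_eq_zero hK hK₀ hKc]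

lemma pow_mul_measureReal_le_setIntegral_neg_gradient_gauge [Nontrivial V] (hK : Convex ℝ K)
    (hK₀ : K ∈ 𝓝 0) (hKc : IsCompact K) {W : Set V} (hW : IsCompact W) {r : ℝ} (hr : 0 < r)
    (hWK : r ^ finrank ℝ V * μ.real W = μ.real K) (hf : Continuous f) (hf₀ : ∀ x, 0 ≤ f x)
    (hWf : ∀ z ∈ W, ∀ y, ⟪y, z⟫ ≤ f y) :
    r ^ (finrank ℝ V - 1) * μ.real W ≤ ∫ x in interior K, f (-gradient (gauge K) x) ∂μ := by
  have measure_eq : μ (interior K) = ENNReal.ofReal (r ^ finrank ℝ V) * μ (-W) := by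
    rw [measure_interior_of_convex hK, Measure.measure_neg,
      ← ofReal_measureReal hKc.measure_lt_top.ne, ← hWK, ENNReal.ofReal_mul (by positivity),
      ofReal_measureReal hW.measure_lt_top.ne]
  have wulff := wulff_inequality (φ := fun ℓ ↦ f (-(InnerProductSpace.toDual ℝ V).symm ℓ)) hK hK₀
    hW.neg hr measure_eq (by fun_prop) fun z hz ℓ ↦ by
      simpa [InnerProductSpace.toDual_symm_apply] using
        hWf _ hz (-(InnerProductSpace.toDual ℝ V).symm ℓ)
  have integrable := integrableOn_comp_gradient_gauge (μ := μ) (f := fun v ↦ f (-v)) hK hK₀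
    (by fun_prop) (measure_interior_of_convex (μ := μ) hK ▸ hKc.measure_lt_top.ne)
  rw [Measure.measure_neg, ← ofReal_measureReal hW.measure_lt_top.ne,
    ← ENNReal.ofReal_mul (by positivity)] at wulff
  rw [← ENNReal.ofReal_le_ofReal_iff (integral_nonneg fun x ↦ hf₀ _),
    ofReal_integral_eq_lintegral_ofReal integrable (.of_forall fun x ↦ hf₀ _)]
  exact wulff

lemma ofReal_le_setLIntegral_neg_gradient_gauge [Nontrivial V] (hK : Convex ℝ K)
    (hK₀ : K ∈ 𝓝 0) (hKc : IsCompact K) {W : Set V} (hW : IsCompact W) {r : ℝ} (hr : 0 < r)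
    (hWK : r ^ finrank ℝ V * μ.real W = μ.real K) (hf : Continuous f) (hf₀ : ∀ x, 0 ≤ f x)
    (hWf : ∀ z ∈ W, ∀ y, ⟪y, z⟫ ≤ f y) {a b : ℝ} (ha : 0 ≤ a) (e : V) :
    ENNReal.ofReal (μ.real W * r ^ (finrank ℝ V - 1) * (a + b * r)) ≤
      ∫⁻ x in interior K, ENNReal.ofReal
        (a * f (-gradient (gauge K) x) + b * (1 + ⟪gradient (gauge K) x, e⟫)) ∂μ := by
  have hK_int : μ (interior K) ≠ ∞ := measure_interior_of_convex (μ := μ) hK ▸ hKc.measure_lt_top.ne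
  have integrable := (integrableOn_comp_gradient_gauge (μ := μ) (f := fun v ↦ a * f (-v)) hK hK₀
    (by fun_prop) hK_int)
  have integrable' := (integrableOn_comp_gradient_gauge (μ := μ)
    (f := fun v ↦ b * (1 + ⟪v, e⟫)) hK hK₀ (by fun_prop) hK_int)
  refine (ENNReal.ofReal_le_ofReal ?_).trans
    (ofReal_integral_le_lintegral_ofReal (integrable.add integrable'))
  calc μ.real W * r ^ (finrank ℝ V - 1) * (a + b * r)
      = a * (r ^ (finrank ℝ V - 1) * μ.real W) + b * μ.real K := by
        rw [← hWK, ← mul_pow_sub_one finrank_pos.ne' r]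
        ring
    _ ≤ a * (∫ x in interior K, f (-gradient (gauge K) x) ∂μ) + b * μ.real K := by
        gcongr
        exact pow_mul_measureReal_le_setIntegral_neg_gradient_gauge hK hK₀ hKc hW hr hWK hf hf₀ hWf
    _ = ∫ x in interior K,
          (a * f (-gradient (gauge K) x) + b * (1 + ⟪gradient (gauge K) x, e⟫)) ∂μ := by
        rw [integral_add integrable integrable', integral_const_mul, integral_const_mul,
          setIntegral_interior_one_add_inner_gradient_gauge hK hK₀ hKc]

end GradientIntegrals

section ConeOverBase

variable {n : ℕ} {ν : EuclideanSpace ℝ (Fin n)} {h r : ℝ}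
  {Φ φ : EuclideanSpace ℝ (Fin n) → ℝ} {g : ℝ × ℝ → ℝ}
  {νC : EuclideanSpace ℝ (Fin n) → EuclideanSpace ℝ (Fin n)}

lemma ofReal_le_lintegral_coneOver_image_frontier [Nontrivial (ℝ ∙ ν)ᗮ] (hν : ‖ν‖ = 1)
    (hghom : ∀ l : ℝ, 0 < l → ∀ p : ℝ × ℝ, 0 ≤ p.1 → 0 ≤ p.2 → g (l * p.1, l * p.2) = l * g p)
    (hgconv : ConvexOn ℝ (Ici (0 : ℝ) ×ˢ Ici (0 : ℝ)) g)
    (hgmono : ∀ t : ℝ, 0 ≤ t → MonotoneOn (fun s ↦ g (s, t)) (Ici (0 : ℝ)))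
    (hφhom : ∀ l : ℝ, 0 < l → ∀ z, ⟪z, ν⟫ = 0 → φ (l • z) = l * φ z)
    (hφconv : ConvexOn ℝ {z | ⟪z, ν⟫ = 0} φ) (hφ₀ : ∀ z, ⟪z, ν⟫ = 0 → 0 ≤ φ z)
    (hadm : ∀ x, 0 ≤ ⟪x, ν⟫ → g (φ (x - ⟪x, ν⟫ • ν), ⟪x, ν⟫) ≤ Φ x)
    {e : (ℝ ∙ ν)ᗮ} {K W : Set (ℝ ∙ ν)ᗮ} (hK : Convex ℝ K) (hK₀ : K ∈ 𝓝 0) (hKc : IsCompact K)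
    (he : -e ∈ K) (hW : IsCompact W) (hWφ : ∀ z ∈ W, ∀ y : (ℝ ∙ ν)ᗮ, ⟪y, z⟫ ≤ φ y)
    (hh : 0 < h) (hr : 0 < r)
    (hWK : r ^ finrank ℝ (ℝ ∙ ν)ᗮ * μH[finrank ℝ (ℝ ∙ ν)ᗮ].real W =
      μH[finrank ℝ (ℝ ∙ ν)ᗮ].real K)
    (hνC : ∀ᵐ y ∂(μH[finrank ℝ (ℝ ∙ ν)ᗮ].restrict
        (frontier (coneOver (-(h • ν)) ((fun z : (ℝ ∙ ν)ᗮ ↦ e + z) '' K)))),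
      IsInnerNormalAt (coneOver (-(h • ν)) ((fun z : (ℝ ∙ ν)ᗮ ↦ e + z) '' K)) y (νC y)) :
    ENNReal.ofReal (μH[finrank ℝ (ℝ ∙ ν)ᗮ].real W * r ^ (finrank ℝ (ℝ ∙ ν)ᗮ - 1) * g (h, r)) ≤
      ∫⁻ y in coneOver (-(h • ν)) ((fun z : (ℝ ∙ ν)ᗮ ↦ e + z) '' frontier K),
        ENNReal.ofReal (Φ (νC y)) ∂μH[finrank ℝ (ℝ ∙ ν)ᗮ] := by
  obtain ⟨α, β, hα, hαβ_eq, hαβ⟩ :=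
    exists_linear_support_of_monotoneOn_fst hgconv hghom hgmono hh hr
  have continuous_φ := continuous_comp_coe_of_convexOn hφconv
  rw [← hαβ_eq]
  refine (ofReal_le_setLIntegral_neg_gradient_gauge hK hK₀ hKc hW hr hWK continuous_φ
    (fun y ↦ hφ₀ y (inner_coe_orthogonal_singleton y)) hWφ (mul_nonneg hα hh.le) e).trans
    (setLIntegral_interior_le_lintegral_coneOver (G := fun v ↦ ENNReal.ofReal (Φ v)) hν hh hK hK₀
      hKc hνC ?_ fun x ↦ ?_)
  · have continuous_φ_neg := continuous_φ.comp continuous_neg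
    refine Measurable.ennreal_ofReal (Continuous.measurable (f := fun v : (ℝ ∙ ν)ᗮ ↦
      α * h * φ (-v : (ℝ ∙ ν)ᗮ) + β * (1 + ⟪v, e⟫)) ?_ |>.comp (measurable_gradient (gauge K)))
    exact (continuous_φ_neg.const_mul (α * h)).add (by fun_prop)
  · rw [← ENNReal.ofReal_mul (norm_nonneg _)]
    exact ENNReal.ofReal_le_ofReal (add_le_norm_graphNormal_mul hν hh hφ₀ hφhom hadm hαβ
      (one_add_inner_gradient_gauge_nonneg hK hK₀ he x))

lemma isometry_add_coe {V : Submodule ℝ (EuclideanSpace ℝ (Fin n))}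
    (c : EuclideanSpace ℝ (Fin n)) : Isometry fun z : V ↦ c + z :=
  Isometry.of_dist_eq fun x y ↦ by rw [dist_add_left, Subtype.dist_eq]

lemma exists_recentered_preimage_coe {V : Submodule ℝ (EuclideanSpace ℝ (Fin n))}
    {E : Set (EuclideanSpace ℝ (Fin n))} (hEc : IsCompact E) (hE : Convex ℝ E) (h0E : 0 ∈ E)
    (hEV : E ⊆ V) (hspan : affineSpan ℝ E = affineSpan ℝ (V : Set (EuclideanSpace ℝ (Fin n)))) :
    ∃ (e : V) (K : Set V), IsCompact K ∧ Convex ℝ K ∧ K ∈ 𝓝 0 ∧ -e ∈ K ∧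
      (fun z : V ↦ (e + z : EuclideanSpace ℝ (Fin n))) '' K = E := by
  obtain ⟨e, he⟩ := interior_preimage_coe_nonempty hE hEV hspan
  refine ⟨e, (fun z : V ↦ (e + z : EuclideanSpace ℝ (Fin n))) ⁻¹' E,
    (isometry_add_coe _).isClosedEmbedding.isCompact_preimage hEc,
    (hE.translate_preimage_right (e : EuclideanSpace ℝ (Fin n))).linear_preimage V.subtype, ?_,
    by simpa using h0E, image_preimage_eq_of_subset fun y hy ↦ ⟨⟨y, hEV hy⟩ - e, by simp⟩⟩
  exact (continuous_const_add e).tendsto' 0 e (add_zero e) (mem_interior_iff_mem_nhds.1 he)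

lemma setOf_inner_eq_zero : {x : EuclideanSpace ℝ (Fin n) | ⟪x, ν⟫ = 0} = (ℝ ∙ ν)ᗮ :=
  Set.ext fun _ ↦ Submodule.mem_orthogonal_singleton_iff_inner_left.symm

lemma finrank_orthogonal_singleton_eq_sub_one (hν : ν ≠ 0) : finrank ℝ (ℝ ∙ ν)ᗮ = n - 1 := by
  have := Submodule.finrank_add_finrank_orthogonal (ℝ ∙ ν)
  rw [finrank_span_singleton hν, finrank_euclideanSpace_fin] at this
  omega

end ConeOverBase

theorem anisotropic_cone_lateral_perimeter_lower_bound_general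
    (n : ℕ) (hn : 2 ≤ n) (Φ : EuclideanSpace ℝ (Fin n) → ℝ)
    (ν : EuclideanSpace ℝ (Fin n)) (hν : ‖ν‖ = 1)
    (g : ℝ × ℝ → ℝ) (φ : EuclideanSpace ℝ (Fin n) → ℝ)
    (hghom : ∀ l : ℝ, 0 < l → ∀ p : ℝ × ℝ, 0 ≤ p.1 → 0 ≤ p.2 → g (l * p.1, l * p.2) = l * g p)
    (hgconv : ConvexOn ℝ (Ici (0 : ℝ) ×ˢ Ici (0 : ℝ)) g)
    (hgmono : ∀ t : ℝ, 0 ≤ t → MonotoneOn (fun s ↦ g (s, t)) (Ici (0 : ℝ)))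
    (hφhom : ∀ l : ℝ, 0 < l → ∀ z, ⟪z, ν⟫ = 0 → φ (l • z) = l * φ z)
    (hφconv : ConvexOn ℝ {z | ⟪z, ν⟫ = 0} φ) (hφcoer : ∀ z, ⟪z, ν⟫ = 0 → z ≠ 0 → 0 < φ z)
    (hadm : ∀ x, 0 ≤ ⟪x, ν⟫ → g (φ (x - ⟪x, ν⟫ • ν), ⟪x, ν⟫) ≤ Φ x)
    (E : Set (EuclideanSpace ℝ (Fin n))) (hEcp : IsCompact E) (hEcv : Convex ℝ E) (h0E : 0 ∈ E)
    (hEsub : E ⊆ {x | ⟪x, ν⟫ = 0})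
    (hEdim : affineSpan ℝ E = affineSpan ℝ {x : EuclideanSpace ℝ (Fin n) | ⟪x, ν⟫ = 0})
    (h : ℝ) (hh : 0 < h) (b : EuclideanSpace ℝ (Fin n)) (hb : b = -h • ν) (r : ℝ) (hr : 0 < r)
    (hrE : r ^ (n - 1) * (μH[(n : ℝ) - 1] (wulffShape ν φ)).toReal = (μH[(n : ℝ) - 1] E).toReal)
    (νC : EuclideanSpace ℝ (Fin n) → EuclideanSpace ℝ (Fin n))
    (hνC : ∀ᵐ x ∂(μH[(n : ℝ) - 1].restrict (frontier (coneOver b E))),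
      IsInnerNormalAt (coneOver b E) x (νC x)) :
    ENNReal.ofReal ((μH[(n : ℝ) - 1] (wulffShape ν φ)).toReal * r ^ (n - 2) * g (h, r)) ≤
      ∫⁻ x in coneOver b (relBoundary {x : EuclideanSpace ℝ (Fin n) | ⟪x, ν⟫ = 0} E),
        ENNReal.ofReal (Φ (νC x)) ∂μH[(n : ℝ) - 1] := by
  have finrank_eq :=
    finrank_orthogonal_singleton_eq_sub_one (norm_ne_zero_iff.1 (hν.trans_ne one_ne_zero))
  have : Nontrivial (ℝ ∙ ν)ᗮ := nontrivial_of_finrank_pos (R := ℝ) (by omega)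
  rw [← Nat.cast_pred (by omega : 0 < n), ← finrank_eq] at hrE hνC ⊢
  rw [show n - 2 = finrank ℝ (ℝ ∙ ν)ᗮ - 1 by omega]
  rw [setOf_inner_eq_zero] at hEsub hEdim ⊢
  rw [hb, neg_smul] at hνC ⊢
  have wulffShape_subset : wulffShape ν φ ⊆ (ℝ ∙ ν)ᗮ := setOf_inner_eq_zero ▸ fun z hz ↦ hz.1
  rw [← hausdorffMeasure_preimage_coe (Nat.cast_nonneg _) wulffShape_subset] at hrE ⊢
  obtain ⟨e, K, hKc, hK, hK₀, he, rfl⟩ := exists_recentered_preimage_coe hEcp hEcv h0E hEsub hEdim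
  rw [(isometry_add_coe _).hausdorffMeasure_image (.inl (Nat.cast_nonneg _))] at hrE
  refine (ofReal_le_lintegral_coneOver_image_frontier hν hghom hgconv hgmono hφhom hφconv
    (fun z hz ↦ nonneg_of_forall_pos hφhom hφcoer hz) hadm hK hK₀ hKc he
    (isCompact_preimage_coe_wulffShape hφhom hφconv hφcoer)
    (fun z hz ↦ (coe_mem_wulffShape_iff hφhom hφconv hφcoer).1 hz) hh hr hrE hνC).trans
    (lintegral_mono_set ?_)
  rintro y ⟨t, ht, x, hx, rfl⟩
  exact ⟨t, ht, x, image_frontier_subset_relBoundary (fun z ↦ (e + z).2) hKc.isClosed hx, rfl⟩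

/-- Anisotropic cone lemma: for an admissible `Φ` with data `(g_ν, φ_ν)`, the lateral
`Φ`-perimeter of the cone of height `h` over an `(n-1)`-dimensional convex body
`E ⊆ ν^⊥` with `0 ∈ E` is at least `ℋ^{n-1}(W_ν) r^{n-2} g_ν(h, r)`, where
`r^{n-1} ℋ^{n-1}(W_ν) = ℋ^{n-1}(E)`. -/
theorem anisotropic_cone_lateral_perimeter_lower_bound
    (n : ℕ) (hn : 2 ≤ n)
    (Φ : EuclideanSpace ℝ (Fin n) → ℝ)
    (hΦ0 : ∀ x, 0 ≤ Φ x)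
    (hΦhom : ∀ l : ℝ, 0 < l → ∀ x, Φ (l • x) = l * Φ x)
    (hΦconv : ConvexOn ℝ Set.univ Φ)
    (ν : EuclideanSpace ℝ (Fin n)) (hν : ‖ν‖ = 1)
    -- admissibility data in direction ν:
    (g : ℝ × ℝ → ℝ) (φ : EuclideanSpace ℝ (Fin n) → ℝ)
    (hg0 : ∀ p : ℝ × ℝ, 0 ≤ p.1 → 0 ≤ p.2 → 0 ≤ g p)
    (hgne : ∃ p : ℝ × ℝ, 0 ≤ p.1 ∧ 0 ≤ p.2 ∧ g p ≠ 0)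
    (hghom : ∀ l : ℝ, 0 < l → ∀ p : ℝ × ℝ, 0 ≤ p.1 → 0 ≤ p.2 →
      g (l * p.1, l * p.2) = l * g p)
    (hgconv : ConvexOn ℝ (Set.Ici (0 : ℝ) ×ˢ Set.Ici (0 : ℝ)) g)
    (hgmono : ∀ t : ℝ, 0 ≤ t → MonotoneOn (fun s => g (s, t)) (Set.Ici (0 : ℝ)))
    (hφ0 : ∀ z : EuclideanSpace ℝ (Fin n), ⟪z, ν⟫ = 0 → 0 ≤ φ z)
    (hφhom : ∀ l : ℝ, 0 < l → ∀ z : EuclideanSpace ℝ (Fin n), ⟪z, ν⟫ = 0 →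
      φ (l • z) = l * φ z)
    (hφconv : ConvexOn ℝ {z : EuclideanSpace ℝ (Fin n) | ⟪z, ν⟫ = 0} φ)
    (hφcoer : ∀ z : EuclideanSpace ℝ (Fin n), ⟪z, ν⟫ = 0 → z ≠ 0 → 0 < φ z)
    (hadm : ∀ x : EuclideanSpace ℝ (Fin n), 0 ≤ ⟪x, ν⟫ →
      g (φ (x - ⟪x, ν⟫ • ν), ⟪x, ν⟫) ≤ Φ x)
    -- the base of the cone:
    (E : Set (EuclideanSpace ℝ (Fin n)))
    (hEcp : IsCompact E) (hEcv : Convex ℝ E) (h0E : (0 : EuclideanSpace ℝ (Fin n)) ∈ E)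
    (hEsub : E ⊆ {x : EuclideanSpace ℝ (Fin n) | ⟪x, ν⟫ = 0})
    (hEdim : affineSpan ℝ E = affineSpan ℝ {x : EuclideanSpace ℝ (Fin n) | ⟪x, ν⟫ = 0})
    (h : ℝ) (hh : 0 < h)
    (b : EuclideanSpace ℝ (Fin n)) (hb : b = -h • ν)
    (r : ℝ) (hr : 0 < r)
    (hrE : r ^ (n - 1) * (μH[(n : ℝ) - 1] (wulffShape ν φ)).toReal =
      (μH[(n : ℝ) - 1] E).toReal)
    -- the inner unit normal of the cone:
    (νC : EuclideanSpace ℝ (Fin n) → EuclideanSpace ℝ (Fin n))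
    (hνC : ∀ᵐ x ∂(μH[(n : ℝ) - 1].restrict (frontier (coneOver b E))),
      IsInnerNormalAt (coneOver b E) x (νC x)) :
    ENNReal.ofReal ((μH[(n : ℝ) - 1] (wulffShape ν φ)).toReal * r ^ (n - 2) * g (h, r)) ≤
      ∫⁻ x in coneOver b
          (relBoundary {x : EuclideanSpace ℝ (Fin n) | ⟪x, ν⟫ = 0} E),
        ENNReal.ofReal (Φ (νC x)) ∂μH[(n : ℝ) - 1] :=
  anisotropic_cone_lateral_perimeter_lower_bound_general n hn Φ ν hν g φ hghom hgconv hgmono hφhom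
    hφconv hφcoer hadm E hEcp hEcv h0E hEsub hEdim h hh b hb r hr hrE νC hνC
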